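/- Let (Ω,𝔉,P) be a probability space, (𝔉_t)_{t=0}^T a filtration of P-complete sub-σ-algebras, and (Π_t)_{t=0}^T a bid-ask process with solvency cones K_t(ω)=K(Π_t(ω)). Then the robust no-arbitrage condition NA^r holds if and only if there exists an ℝ^d-valued P-martingale Z=(Z_t)_{t=0}^T adapted to (𝔉_t) such that Z_t(ω) ∈ ri K_t*(ω) for a.e. ω and every t=0,…,T (a strictly consistent price process). -/

import Mathlib

open MeasureTheory Set

/-- A bid-ask matrix: positive entries, ones on the diagonal, and
`π^{ij} ≤ π^{ik} π^{kj}`. -/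
def IsBidAskMatrix {d : ℕ} (M : Matrix (Fin d) (Fin d) ℝ) : Prop :=
  (∀ i j, 0 < M i j) ∧ (∀ i, M i i = 1) ∧ ∀ i j k, M i j ≤ M i k * M k j

/-- The smallest closed convex cone containing a set `S ⊆ ℝ^d`. -/
def generatedClosedCone {d : ℕ} (S : Set (Fin d → ℝ)) : Set (Fin d → ℝ) :=
  ⋂₀ {C | S ⊆ C ∧ IsClosed C ∧ Convex ℝ C ∧ ∀ x ∈ C, ∀ c : ℝ, 0 ≤ c → c • x ∈ C}

/-- The solvency cone `K(Π)`: the closed convex cone generated by the standard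
basis vectors `e_i` and the vectors `π^{ij} e_i − e_j`. -/
def solvencyCone {d : ℕ} (M : Matrix (Fin d) (Fin d) ℝ) : Set (Fin d → ℝ) :=
  generatedClosedCone
    ((Set.range fun i : Fin d => (Pi.single i 1 : Fin d → ℝ)) ∪
      {v | ∃ i j : Fin d, v = M i j • (Pi.single i 1 : Fin d → ℝ) - Pi.single j 1})

/-- The dual cone `K* = {w : ⟨x,w⟩ ≥ 0 for all x ∈ K}`. -/
def dualCone' {d : ℕ} (K : Set (Fin d → ℝ)) : Set (Fin d → ℝ) :=
  {w | ∀ x ∈ K, 0 ≤ ∑ i, x i * w i}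

/-- `ξ ∈ L⁰(G, ℋ)`: `ξ` is `ℋ`-measurable and `ξ(ω) ∈ G(ω)` for a.e. `ω`. -/
def MemL0 {Ω : Type*} {d : ℕ} {m : MeasurableSpace Ω} (P : Measure Ω)
    (H : MeasurableSpace Ω) (G : Ω → Set (Fin d → ℝ)) (ξ : Ω → Fin d → ℝ) : Prop :=
  Measurable[H] ξ ∧ ∀ᵐ ω ∂P, ξ ω ∈ G ω

/-- `x ∈ A_T(Π) = Σ_{t=0}^T L⁰(−K_t, 𝔉_t)`: the attainable terminal portfolios
of self-financing strategies for the bid-ask process `Π`. -/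
def MemAttainable {Ω : Type*} {d T : ℕ} {m : MeasurableSpace Ω} (P : Measure Ω)
    (ℱ : Filtration (Fin (T + 1)) m)
    (Pi_ : Fin (T + 1) → Ω → Matrix (Fin d) (Fin d) ℝ) (x : Ω → Fin d → ℝ) : Prop :=
  ∃ xs : Fin (T + 1) → Ω → Fin d → ℝ,
    (∀ t, MemL0 P (ℱ t) (fun ω => -(solvencyCone (Pi_ t ω))) (xs t)) ∧
    ∀ ω, (∑ t, xs t ω) = x ω

/-- The robust no-arbitrage condition NAʳ for a bid-ask process `Π`: there is a
bid-ask process `Π̃` whose bid-ask intervals lie a.s. in the relative interiors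
of those of `Π`, and which admits no arbitrage:
`A_T(Π̃) ∩ L⁰(ℝ₊^d, 𝔉_T) = {0}`. -/
def RobustNoArbitrage {Ω : Type*} {d T : ℕ} {m : MeasurableSpace Ω} (P : Measure Ω)
    (ℱ : Filtration (Fin (T + 1)) m)
    (Pi_ : Fin (T + 1) → Ω → Matrix (Fin d) (Fin d) ℝ) : Prop :=
  ∃ Pi' : Fin (T + 1) → Ω → Matrix (Fin d) (Fin d) ℝ,
    (∀ t i j, Measurable[ℱ t] fun ω => Pi' t ω i j) ∧
    (∀ t ω, IsBidAskMatrix (Pi' t ω)) ∧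
    (∀ t i j, ∀ᵐ ω ∂P,
      Icc (1 / Pi' t ω j i) (Pi' t ω i j) ⊆
        intrinsicInterior ℝ (Icc (1 / Pi_ t ω j i) (Pi_ t ω i j))) ∧
    ∀ x : Ω → Fin d → ℝ, MemAttainable P ℱ Pi' x →
      MemL0 P (ℱ (Fin.last T)) (fun _ => {v | ∀ i, 0 ≤ v i}) x →
      ∀ᵐ ω ∂P, x ω = 0

/-- Attainable positions generated by finitely many generators `g k`, with `H k`-measurable
coefficients, nonnegative when `pos k`. -/
def AttS {Ω ι E : Type*} {m : MeasurableSpace Ω} [NormedAddCommGroup E] [NormedSpace ℝ E]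
    (P : Measure Ω) (H : ι → MeasurableSpace Ω)
    (pos : ι → Prop) (g : ι → Ω → E) (S : Finset ι) (x : Ω → E) : Prop :=
  ∃ c : ι → Ω → ℝ, (∀ k ∈ S, Measurable[H k] (c k)) ∧ (∀ k ∈ S, pos k → ∀ ω, 0 ≤ c k ω) ∧
    ∀ᵐ ω ∂P, x ω = ∑ k ∈ S, c k ω • g k ω

section closedness

variable {Ω ι E : Type*} {m : MeasurableSpace Ω} [NormedAddCommGroup E] [NormedSpace ℝ E]
    {P : Measure Ω} {H : ι → MeasurableSpace Ω}
    {pos : ι → Prop} {g : ι → Ω → E} {S : Finset ι}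

theorem AttS.congr {x y : Ω → E} (h : AttS P H pos g S x) (hxy : ∀ᵐ ω ∂P, y ω = x ω) :
    AttS P H pos g S y := by
  obtain ⟨c, h1, h2, h3⟩ := h
  exact ⟨c, h1, h2, by filter_upwards [h3, hxy] with ω a b; rw [b, a]⟩

theorem AttS.add {x y : Ω → E} (hx : AttS P H pos g S x) (hy : AttS P H pos g S y) :
    AttS P H pos g S (fun ω => x ω + y ω) := by
  obtain ⟨c, h1, h2, h3⟩ := hx
  obtain ⟨c', h1', h2', h3'⟩ := hy
  refine ⟨fun k ω => c k ω + c' k ω, fun k hk => ?_, fun k hk hp ω => ?_, ?_⟩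
  · exact (h1 k hk).add (h1' k hk)
  · exact add_nonneg (h2 k hk hp ω) (h2' k hk hp ω)
  · filter_upwards [h3, h3'] with ω a b
    rw [a, b, ← Finset.sum_add_distrib]
    simp [add_smul]

theorem AttS.smul {x : Ω → E} (hx : AttS P H pos g S x) {a : Ω → ℝ}
    (ha : ∀ k ∈ S, Measurable[H k] a) (ha0 : ∀ ω, 0 ≤ a ω) :
    AttS P H pos g S (fun ω => a ω • x ω) := by
  obtain ⟨c, h1, h2, h3⟩ := hx
  refine ⟨fun k ω => a ω * c k ω, fun k hk => ?_, fun k hk hp ω => ?_, ?_⟩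
  · exact (ha k hk).mul (h1 k hk)
  · exact mul_nonneg (ha0 ω) (h2 k hk hp ω)
  · filter_upwards [h3] with ω b
    rw [b, Finset.smul_sum]
    simp [mul_smul]

theorem measurable_glue {Ω : Type*} {m : MeasurableSpace Ω} {c : ℕ → Ω → ℝ} (hc : ∀ n, Measurable (c n))
    {N : Ω → ℕ} (hN : Measurable N) : Measurable (fun ω => c (N ω) ω) := by
  have : Measurable (fun p : Ω × ℕ => c p.2 p.1) :=
    measurable_from_prod_countable_left (fun n => hc n)
  exact this.comp (measurable_id.prodMk hN)

theorem AttS.glue {x : ℕ → Ω → E} (hx : ∀ n, AttS P H pos g S (x n)) {N : Ω → ℕ}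
    (hN : ∀ k ∈ S, Measurable[H k] N) :
    AttS P H pos g S (fun ω => x (N ω) ω) := by
  choose c h1 h2 h3 using hx
  refine ⟨fun k ω => c (N ω) k ω, fun k hk => ?_, fun k hk hp ω => h2 _ k hk hp ω, ?_⟩
  · exact @measurable_glue _ (H k) (fun n => c n k) (fun n => h1 n k hk) _ (hN k hk)
  · filter_upwards [ae_all_iff.2 h3] with ω h
    exact h (N ω)

theorem AttS.ins [DecidableEq ι] {x : Ω → E} (hx : AttS P H pos g S x) {a : ι} (haS : a ∉ S)
    {b : Ω → ℝ} (hb : Measurable[H a] b) (hb0 : pos a → ∀ ω, 0 ≤ b ω) :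
    AttS P H pos g (insert a S) (fun ω => b ω • g a ω + x ω) := by
  obtain ⟨c, h1, h2, h3⟩ := hx
  have hne : ∀ k ∈ S, k ≠ a := fun k hk e => haS (e ▸ hk)
  refine ⟨Function.update c a b, fun k hk => ?_, fun k hk hp ω => ?_, ?_⟩
  · rcases Finset.mem_insert.1 hk with rfl | hk
    · simpa using hb
    · simpa [hne k hk] using h1 k hk
  · rcases Finset.mem_insert.1 hk with rfl | hk
    · simpa using hb0 hp ω
    · simpa [hne k hk] using h2 k hk hp ω
  · filter_upwards [h3] with ω h
    rw [Finset.sum_insert haS, h]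
    simp only [Function.update_self]
    congr 1
    refine Finset.sum_congr rfl fun k hk => ?_
    simp [hne k hk]

theorem AttS.mono_insert [DecidableEq ι] {x : Ω → E} (hx : AttS P H pos g S x) {a : ι} (haS : a ∉ S) :
    AttS P H pos g (Insert.insert a S) x := by
  have := hx.ins haS (b := fun _ => 0) (@measurable_const _ _ _ (H a) _) (by simp)
  simpa using this

/-- Null strategies involve no positive generators. -/
def NullProp {Ω ι E : Type*} {m : MeasurableSpace Ω} [NormedAddCommGroup E] [NormedSpace ℝ E]
    [Fintype ι] (P : Measure Ω) (H : ι → MeasurableSpace Ω)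
    (pos : ι → Prop) (g : ι → Ω → E) : Prop :=
  ∀ c : ι → Ω → ℝ, (∀ k, Measurable[H k] (c k)) → (∀ k, pos k → ∀ ω, 0 ≤ c k ω) →
    (∀ᵐ ω ∂P, ∑ k, c k ω • g k ω = 0) → ∀ k, pos k → ∀ᵐ ω ∂P, c k ω • g k ω = 0

theorem NullProp.neg [Fintype ι] [DecidableEq ι] (hnull : NullProp P H pos g) {a : ι} (haS : a ∉ S)
    {b : Ω → ℝ} (hb : Measurable[H a] b) (hb0 : pos a → ∀ ω, 0 ≤ b ω)
    (h : AttS P H pos g S (fun ω => -(b ω • g a ω))) :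
    AttS P H pos g S (fun ω => b ω • g a ω) := by
  classical
  obtain ⟨c0, h10, h20, h30⟩ := h
  set c : ι → Ω → ℝ := fun k => if k ∈ S then c0 k else if k = a then b else 0 with hc
  have hcS : ∀ k ∈ S, c k = c0 k := fun k hk => by simp [hc, hk]
  have hca : c a = b := by simp [hc, haS]
  have hco : ∀ k, k ∉ insert a S → c k = 0 := fun k hk => by
    simp only [Finset.mem_insert, not_or] at hk
    simp [hc, hk.1, hk.2]
  have key := hnull c (fun k => ?_) (fun k hp ω => ?_) ?_
  · refine ⟨fun k => if pos k then 0 else fun ω => - c0 k ω, fun k hk => ?_, fun k hk hp ω => ?_, ?_⟩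
    · beta_reduce
      split_ifs with hp
      · exact @measurable_const _ _ _ (H k) _
      · exact (h10 k hk).neg
    · simp [hp]
    · have key' : ∀ᵐ ω ∂P, ∀ k ∈ S, pos k → c0 k ω • g k ω = 0 := by
        rw [ae_all_iff]; intro k
        by_cases hk : k ∈ S
        · by_cases hp : pos k
          · filter_upwards [key k hp] with ω h
            rw [hcS k hk] at h
            exact fun _ _ => h
          · simp [hp]
        · simp [hk]
      filter_upwards [key', h30] with ω h1 h2
      rw [← neg_neg (b ω • g a ω), h2, ← Finset.sum_neg_distrib]
      refine Finset.sum_congr rfl fun k hk => ?_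
      by_cases hp : pos k
      · simp [hp, h1 k hk hp]
      · simp [hp]
  · by_cases hk : k ∈ S
    · rw [hcS k hk]; exact h10 k hk
    · by_cases hka : k = a
      · rw [hka, hca]; exact hb
      · rw [hco k (by simp [hk, hka])]; exact @measurable_const _ _ _ (H k) _
  · by_cases hk : k ∈ S
    · rw [hcS k hk]; exact h20 k hk hp ω
    · by_cases hka : k = a
      · subst hka; rw [hca]; exact hb0 hp ω
      · rw [hco k (by simp [hk, hka])]; simp
  · filter_upwards [h30] with ω h
    rw [← Finset.sum_subset (Finset.subset_univ (insert a S)), Finset.sum_insert haS, hca]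
    · rw [Finset.sum_congr rfl (fun k hk => by rw [hcS k hk]), ← h]; simp
    · intro k _ hk; rw [hco k hk]; simp

/-- Measurable subsequences. -/
theorem exists_measurable_subseq {Ω : Type*} {m : MeasurableSpace Ω} (l : ℕ → Ω → ℝ)
    (hl : ∀ n, Measurable (l n)) :
    ∃ (N : ℕ → Ω → ℕ) (a : Ω → ℝ), (∀ k, Measurable (N k)) ∧ Measurable a ∧
      (∀ k ω, k ≤ N k ω) ∧
      ∀ ω, Filter.Tendsto (fun k => Real.arctan (l (N k ω) ω)) Filter.atTop (nhds (a ω)) := by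
  classical
  let f : ℕ → Ω → ℝ := fun n ω => Real.arctan (l n ω)
  have hf : ∀ n, Measurable (f n) := fun n => Real.measurable_arctan.comp (hl n)
  let a : Ω → ℝ := fun ω => Filter.limsup (fun n => f n ω) Filter.atTop
  have ha : Measurable a := Measurable.limsup hf
  have hle : ∀ n ω, f n ω ≤ Real.pi / 2 := fun n ω => (Real.arctan_lt_pi_div_two _).le
  have hge : ∀ n ω, -(Real.pi / 2) ≤ f n ω := fun n ω => (Real.neg_pi_div_two_lt_arctan _).le
  have hfreq : ∀ ω (k : ℕ), ∃ n, k ≤ n ∧ |f n ω - a ω| < 1 / ((k : ℝ) + 1) := by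
    intro ω k
    have hε : (0 : ℝ) < 1 / ((k : ℝ) + 1) := by positivity
    have hb1 : Filter.IsBoundedUnder (· ≤ ·) Filter.atTop (fun n => f n ω) :=
      Filter.isBoundedUnder_of ⟨_, fun n => hle n ω⟩
    have hb2 : Filter.IsBoundedUnder (· ≥ ·) Filter.atTop (fun n => f n ω) :=
      Filter.isBoundedUnder_of ⟨_, fun n => hge n ω⟩
    have h1 : ∀ᶠ n in Filter.atTop, f n ω < a ω + 1 / ((k : ℝ) + 1) :=
      Filter.eventually_lt_of_limsup_lt (by linarith) hb1
    have h2 : ∃ᶠ n in Filter.atTop, a ω - 1 / ((k : ℝ) + 1) < f n ω :=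
      Filter.frequently_lt_of_lt_limsup hb2.isCoboundedUnder_le (by linarith)
    obtain ⟨n, h3, h4, h5⟩ := (h2.and_eventually (h1.and (Filter.eventually_ge_atTop k))).exists
    exact ⟨n, h5, by rw [abs_lt]; constructor <;> linarith⟩
  refine ⟨fun k ω => Nat.find (hfreq ω k), a, fun k => ?_, ha, fun k ω => ?_, fun ω => ?_⟩
  · refine measurable_find _ fun n => ?_
    by_cases hkn : k ≤ n
    · simp only [hkn, true_and]
      exact measurableSet_lt ((hf n).sub ha).norm measurable_const
    · simp [hkn]
  · exact (Nat.find_spec (hfreq ω k)).1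
  · rw [tendsto_iff_norm_sub_tendsto_zero]
    refine squeeze_zero (fun _ => norm_nonneg _) (fun k => (Nat.find_spec (hfreq ω k)).2.le) ?_
    exact tendsto_one_div_add_atTop_nhds_zero_nat

theorem tendsto_atTop_of_arctan {u : ℕ → ℝ}
    (h : Filter.Tendsto (fun k => Real.arctan (u k)) Filter.atTop (nhds (Real.pi / 2))) :
    Filter.Tendsto u Filter.atTop Filter.atTop := by
  rw [Filter.tendsto_atTop]
  intro b
  filter_upwards [h.eventually (lt_mem_nhds (Real.arctan_lt_pi_div_two b))] with k hk
  exact (Real.arctan_strictMono.lt_iff_lt.1 hk).le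

end closedness

theorem attS_closed_step {Ω ι E : Type*} {m : MeasurableSpace Ω} [NormedAddCommGroup E]
    [NormedSpace ℝ E] {P : Measure Ω} {H : ι → MeasurableSpace Ω}
    {pos : ι → Prop} {g : ι → Ω → E} [Fintype ι] [DecidableEq ι]
    (hnull : NullProp P H pos g) {S : Finset ι} {a : ι} (haS : a ∉ S)
    (hHS : ∀ k ∈ S, H a ≤ H k)
    (ih : ∀ (xs : ℕ → Ω → E) (x : Ω → E), (∀ n, AttS P H pos g S (xs n)) →
      (∀ᵐ ω ∂P, Filter.Tendsto (fun n => xs n ω) Filter.atTop (nhds (x ω))) → AttS P H pos g S x)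
    (xs : ℕ → Ω → E) (x : Ω → E) (hxs : ∀ n, AttS P H pos g (insert a S) (xs n))
    (hlim : ∀ᵐ ω ∂P, Filter.Tendsto (fun n => xs n ω) Filter.atTop (nhds (x ω))) :
    AttS P H pos g (insert a S) x := by
  classical
  choose c h1 h2 h3 using hxs
  have hl : ∀ n, Measurable[H a] (c n a) := fun n => h1 n a (by simp)
  obtain ⟨N, α, hN, hα, hNk, hlimα⟩ := @exists_measurable_subseq Ω (H a) (fun n => c n a) hl
  -- the subsequence
  let l : ℕ → Ω → ℝ := fun k ω => c (N k ω) a ω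
  let X : ℕ → Ω → E := fun k ω => xs (N k ω) ω
  let y0 : ℕ → Ω → E := fun n ω => ∑ k ∈ S, c n k ω • g k ω
  let y : ℕ → Ω → E := fun k ω => y0 (N k ω) ω
  have hlm : ∀ k, Measurable[H a] (l k) := fun k =>
    @measurable_glue _ (H a) (fun n => c n a) hl _ (hN k)
  have hlpos : pos a → ∀ k ω, 0 ≤ l k ω := fun hp k ω => h2 _ a (by simp) hp ω
  have hy0 : ∀ n, AttS P H pos g S (y0 n) := fun n =>
    ⟨c n, fun k hk => h1 n k (by simp [hk]), fun k hk => h2 n k (by simp [hk]),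
      Filter.Eventually.of_forall fun ω => rfl⟩
  have hy : ∀ k, AttS P H pos g S (y k) := fun k =>
    AttS.glue hy0 (fun j hj => (hN k).mono (hHS j hj) le_rfl)
  have hX : ∀ᵐ ω ∂P, ∀ k, X k ω = l k ω • g a ω + y k ω := by
    filter_upwards [ae_all_iff.2 h3] with ω h k
    have := h (N k ω)
    rw [Finset.sum_insert haS] at this
    exact this
  have hXlim : ∀ᵐ ω ∂P, Filter.Tendsto (fun n => X n ω) Filter.atTop (nhds (x ω)) := by
    filter_upwards [hlim] with ω h
    exact h.comp (Filter.tendsto_atTop_mono (fun k => hNk k ω) Filter.tendsto_id)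
  have hαle : ∀ ω, α ω ≤ Real.pi / 2 := fun ω =>
    le_of_tendsto' (hlimα ω) fun k => (Real.arctan_lt_pi_div_two _).le
  have hαge : ∀ ω, -(Real.pi / 2) ≤ α ω := fun ω =>
    ge_of_tendsto' (hlimα ω) fun k => (Real.neg_pi_div_two_lt_arctan _).le
  have hα0 : pos a → ∀ ω, 0 ≤ α ω := fun hp ω =>
    ge_of_tendsto' (hlimα ω) fun k => Real.arctan_nonneg.2 (hlpos hp _ ω)
  have hpi := Real.pi_pos
  -- the unbounded parts
  have key : ∀ s : ℝ, (s = 1 ∨ s = -1) →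
      AttS P H pos g S (fun ω => (if α ω = s * (Real.pi / 2) then (1 : ℝ) else 0) • x ω) := by
    intro s hs
    have hss : s * s = 1 := by rcases hs with rfl | rfl <;> norm_num
    let I : Ω → ℝ := fun ω => if α ω = s * (Real.pi / 2) then (1 : ℝ) else 0
    have hIm : Measurable[H a] I :=
      Measurable.ite (hα (measurableSet_singleton _)) measurable_const measurable_const
    have hI0 : ∀ ω, 0 ≤ I ω := fun ω => by simp only [I]; split_ifs <;> norm_num
    let b : Ω → ℝ := fun ω => s * I ω
    have hbm : Measurable[H a] b := hIm.const_mul s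
    have hb0 : pos a → ∀ ω, 0 ≤ b ω := by
      intro hp ω
      rcases hs with rfl | rfl
      · simpa [b] using hI0 ω
      · have : ¬ (α ω = -1 * (Real.pi / 2)) := by
          intro h; have := hα0 hp ω; linarith
        simp only [b, I, if_neg this]; simp
    let mm : ℕ → Ω → ℝ := fun k ω => I ω * (max (s * l k ω) 0)⁻¹
    have hmm : ∀ k, Measurable[H a] (mm k) := fun k =>
      hIm.mul (((hlm k).const_mul s).max measurable_const).inv
    have hmm0 : ∀ k ω, 0 ≤ mm k ω := fun k ω =>
      mul_nonneg (hI0 ω) (inv_nonneg.2 (le_max_right _ _))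
    have hneg : AttS P H pos g S (fun ω => -(b ω • g a ω)) := by
      refine ih (fun k ω => mm k ω • y k ω) _
        (fun k => (hy k).smul (fun j hj => (hmm k).mono (hHS j hj) le_rfl) (hmm0 k)) ?_
      filter_upwards [hX, hXlim] with ω hx hxl
      by_cases hω : α ω = s * (Real.pi / 2)
      · have hI : I ω = 1 := by simp [I, hω]
        have hu : Filter.Tendsto (fun k => s * l k ω) Filter.atTop Filter.atTop := by
          apply tendsto_atTop_of_arctan
          have h := (hlimα ω).const_mul s
          rw [hω, ← mul_assoc, hss, one_mul] at h
          refine h.congr fun k => ?_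
          rcases hs with rfl | rfl <;> simp [l, Real.arctan_neg]
        have hmz : Filter.Tendsto (fun k => mm k ω) Filter.atTop (nhds 0) := by
          simp only [mm, hI, one_mul]
          exact tendsto_inv_atTop_zero.comp
            (Filter.tendsto_atTop_mono (fun k => le_max_left _ _) hu)
        have h4 : Filter.Tendsto (fun k => mm k ω • X k ω - b ω • g a ω) Filter.atTop
            (nhds ((0 : ℝ) • x ω - b ω • g a ω)) := (hmz.smul hxl).sub_const _
        rw [zero_smul, zero_sub] at h4
        refine h4.congr' ?_
        filter_upwards [hu.eventually_gt_atTop 0] with k hk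
        have h5 : mm k ω * l k ω = b ω := by
          simp only [mm, b, hI, max_eq_left hk.le]
          have hne : s * l k ω ≠ 0 := hk.ne'
          have hne1 : s ≠ 0 := left_ne_zero_of_mul hne
          have hne2 : l k ω ≠ 0 := right_ne_zero_of_mul hne
          field_simp
          nlinarith
        rw [hx k, smul_add, smul_smul, h5]
        abel
      · have hI : I ω = 0 := by simp [I, hω]
        simp [mm, b, hI]
    have hposb := hnull.neg haS hbm hb0 hneg
    refine ih (fun k ω => I ω • X k ω) _ (fun k => ?_) ?_
    · have e1 := hposb.smul (a := fun ω => max (s * l k ω) 0)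
        (fun j hj => (((hlm k).const_mul s).max measurable_const).mono (hHS j hj) le_rfl)
        (fun ω => le_max_right _ _)
      have e2 := hneg.smul (a := fun ω => max (-(s * l k ω)) 0)
        (fun j hj => ((((hlm k).const_mul s).neg).max measurable_const).mono (hHS j hj) le_rfl)
        (fun ω => le_max_right _ _)
      have e3 := (hy k).smul (fun j hj => hIm.mono (hHS j hj) le_rfl) hI0
      refine ((e1.add e2).add e3).congr ?_
      filter_upwards [hX] with ω hx
      have e4 : max (s * l k ω) 0 - max (-(s * l k ω)) 0 = s * l k ω := by
        rcases le_total 0 (s * l k ω) with h | h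
        · rw [max_eq_left h, max_eq_right (by linarith)]; ring
        · rw [max_eq_right h, max_eq_left (by linarith)]; ring
      rw [hx k, smul_neg, ← sub_eq_add_neg, ← sub_smul, e4, smul_add, smul_smul, smul_smul]
      congr 2
      simp only [b]
      linear_combination (-(I ω * l k ω)) * hss
    · filter_upwards [hXlim] with ω h
      exact h.const_smul _
  -- the bounded part
  let J : Ω → ℝ := fun ω => if α ω < Real.pi / 2 ∧ -(Real.pi / 2) < α ω then 1 else 0
  have hJm : Measurable[H a] J := by
    refine Measurable.ite ?_ measurable_const measurable_const
    exact (hα measurableSet_Iio).inter (hα measurableSet_Ioi)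
  have hJ0 : ∀ ω, 0 ≤ J ω := fun ω => by simp only [J]; split_ifs <;> norm_num
  let b : Ω → ℝ := fun ω => J ω * (Real.sin (α ω) / Real.cos (α ω))
  have hbm : Measurable[H a] b :=
    hJm.mul ((Real.measurable_sin.comp hα).div (Real.measurable_cos.comp hα))
  have hb0 : pos a → ∀ ω, 0 ≤ b ω := fun hp ω => by
    refine mul_nonneg (hJ0 ω) ?_
    rw [← Real.tan_eq_sin_div_cos]
    exact Real.tan_nonneg_of_nonneg_of_le_pi_div_two (hα0 hp ω) (hαle ω)
  have hbdd : AttS P H pos g S (fun ω => J ω • x ω - b ω • g a ω) := by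
    refine ih (fun k ω => J ω • y k ω) _
      (fun k => (hy k).smul (fun j hj => hJm.mono (hHS j hj) le_rfl) hJ0) ?_
    filter_upwards [hX, hXlim] with ω hx hxl
    by_cases hω : α ω < Real.pi / 2 ∧ -(Real.pi / 2) < α ω
    · have hJ : J ω = 1 := by simp [J, hω]
      have hcos : Real.cos (α ω) ≠ 0 := (Real.cos_pos_of_mem_Ioo ⟨hω.2, hω.1⟩).ne'
      have hll : Filter.Tendsto (fun k => l k ω) Filter.atTop (nhds (b ω)) := by
        have := (Real.continuousAt_tan.2 hcos).tendsto.comp (hlimα ω)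
        rw [Real.tan_eq_sin_div_cos] at this
        simp only [b, hJ, one_mul]
        refine this.congr fun k => ?_
        simp [Real.tan_arctan, l]
      have := (hxl.const_smul (J ω)).sub (hll.smul_const (g a ω))
      refine this.congr fun k => ?_
      rw [hJ, one_smul, one_smul, hx k]; abel
    · have hJ : J ω = 0 := by simp only [J, if_neg hω]
      simp [b, hJ]
  have h5 := ((hbdd.ins haS hbm hb0).add ((key 1 (Or.inl rfl)).mono_insert haS)).add
    ((key (-1) (Or.inr rfl)).mono_insert haS)
  refine h5.congr (Filter.Eventually.of_forall fun ω => ?_)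
  have : J ω + (if α ω = 1 * (Real.pi / 2) then (1 : ℝ) else 0) +
      (if α ω = -1 * (Real.pi / 2) then (1 : ℝ) else 0) = 1 := by
    simp only [J]
    rcases (hαle ω).lt_or_eq with h6 | h6
    · rcases (hαge ω).lt_or_eq with h7 | h7
      · rw [if_pos ⟨h6, h7⟩, if_neg (by linarith), if_neg (by linarith)]; norm_num
      · rw [if_neg (by intro h; linarith [h.2]), if_neg (by linarith), if_pos (by linarith)]; norm_num
    · rw [if_neg (by intro h; linarith [h.1]), if_pos (by linarith), if_neg (by linarith)]; norm_num
  beta_reduce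
  rw [add_sub_cancel, ← add_smul, ← add_smul, this, one_smul]

theorem attS_closed {Ω ι E : Type*} {m : MeasurableSpace Ω} [NormedAddCommGroup E]
    [NormedSpace ℝ E] {P : Measure Ω} {H : ι → MeasurableSpace Ω}
    {pos : ι → Prop} {g : ι → Ω → E} [Fintype ι] [DecidableEq ι]
    (hnull : NullProp P H pos g) (f : ι → ℕ) (hf : ∀ a b, f a ≤ f b → H a ≤ H b) (S : Finset ι) :
    ∀ (xs : ℕ → Ω → E) (x : Ω → E), (∀ n, AttS P H pos g S (xs n)) →
      (∀ᵐ ω ∂P, Filter.Tendsto (fun n => xs n ω) Filter.atTop (nhds (x ω))) →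
        AttS P H pos g S x := by
  induction S using Finset.induction_on_min_value f with
  | empty =>
    intro xs x hxs hlim
    refine ⟨fun _ _ => 0, by simp, by simp, ?_⟩
    choose c h1 h2 h3 using hxs
    filter_upwards [hlim, ae_all_iff.2 h3] with ω h h'
    simp only [Finset.sum_empty] at h' ⊢
    simp only [h'] at h
    exact tendsto_nhds_unique h tendsto_const_nhds
  | insert a s ha hmin ih =>
    exact attS_closed_step hnull ha (fun k hk => hf _ _ (hmin k hk)) ih

section krepsyan

variable {Ω : Type*} {m : MeasurableSpace Ω} (P : Measure Ω) [IsProbabilityMeasure P] {d : ℕ}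

/-- The element `1_B e_i` of `L²`. -/
noncomputable def basisInd (i : Fin d) {B : Set Ω} (hB : MeasurableSet B) :
    Lp (EuclideanSpace ℝ (Fin d)) 2 P :=
  indicatorConstLp 2 hB (measure_ne_top P B) (EuclideanSpace.single i (1 : ℝ))

theorem inner_basisInd (i : Fin d) {B : Set Ω} (hB : MeasurableSet B)
    (z : Lp (EuclideanSpace ℝ (Fin d)) 2 P) :
    inner ℝ (basisInd P i hB) z = ∫ ω in B, z ω i ∂P := by
  rw [basisInd, L2.inner_indicatorConstLp_eq_setIntegral_inner]
  simp [EuclideanSpace.inner_single_left]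

theorem integrable_coord (i : Fin d) (z : Lp (EuclideanSpace ℝ (Fin d)) 2 P) :
    Integrable (fun ω => z ω i) P := by
  have h : Integrable (z : Ω → EuclideanSpace ℝ (Fin d)) P :=
    (Lp.memLp z).integrable (by norm_num)
  exact (EuclideanSpace.proj (𝕜 := ℝ) i : EuclideanSpace ℝ (Fin d) →L[ℝ] ℝ).integrable_comp h

theorem measurable_coord (i : Fin d) (z : Lp (EuclideanSpace ℝ (Fin d)) 2 P) :
    Measurable (fun ω => z ω i) := by
  have h : Measurable (z : Ω → EuclideanSpace ℝ (Fin d)) := (Lp.stronglyMeasurable z).measurable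
  exact (EuclideanSpace.proj (𝕜 := ℝ) i : EuclideanSpace ℝ (Fin d) →L[ℝ] ℝ).measurable.comp h

theorem polar_nonneg (C : ProperCone ℝ (Lp (EuclideanSpace ℝ (Fin d)) 2 P))
    (hneg : ∀ (i : Fin d) (B : Set Ω) (hB : MeasurableSet B), -(basisInd P i hB) ∈ C)
    (z : Lp (EuclideanSpace ℝ (Fin d)) 2 P) (hz : ∀ c ∈ C, inner ℝ c z ≤ 0) (i : Fin d) :
    ∀ᵐ ω ∂P, 0 ≤ z ω i := by
  refine ae_nonneg_of_forall_setIntegral_nonneg (integrable_coord P i z) fun B hB _ => ?_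
  have := hz _ (hneg i B hB)
  rw [inner_neg_left, inner_basisInd] at this
  linarith

theorem kreps_yan_coord (C : ProperCone ℝ (Lp (EuclideanSpace ℝ (Fin d)) 2 P))
    (hneg : ∀ (i : Fin d) (B : Set Ω) (hB : MeasurableSet B), -(basisInd P i hB) ∈ C)
    (hpos : ∀ (i : Fin d) (B : Set Ω) (hB : MeasurableSet B), P B ≠ 0 → basisInd P i hB ∉ C)
    (i : Fin d) :
    ∃ z : Lp (EuclideanSpace ℝ (Fin d)) 2 P, (∀ c ∈ C, inner ℝ c z ≤ 0) ∧
      ∀ᵐ ω ∂P, 0 < z ω i := by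
  classical
  let D : Set (Lp (EuclideanSpace ℝ (Fin d)) 2 P) := {z | ∀ c ∈ C, inner ℝ c z ≤ 0}
  have hDadd : ∀ z ∈ D, ∀ w ∈ D, z + w ∈ D := fun z hz w hw c hc => by
    rw [inner_add_right]; linarith [hz c hc, hw c hc]
  have hDsmul : ∀ z ∈ D, ∀ r : ℝ, 0 ≤ r → r • z ∈ D := fun z hz r hr c hc => by
    rw [real_inner_smul_right]; exact mul_nonpos_of_nonneg_of_nonpos hr (hz c hc)
  have hDnn : ∀ z ∈ D, ∀ᵐ ω ∂P, 0 ≤ z ω i := fun z hz => polar_nonneg P C hneg z hz i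
  have hDsum : ∀ w : ℕ → Lp (EuclideanSpace ℝ (Fin d)) 2 P, (∀ n, w n ∈ D) → Summable w →
      (∑' n, w n) ∈ D := by
    intro w hw hs c hc
    have : HasSum (fun n => inner ℝ c (w n)) (inner ℝ c (∑' n, w n)) :=
      hs.hasSum.mapL (innerSL ℝ c)
    rw [← this.tsum_eq]
    exact tsum_nonpos fun n => hw n c hc
  let φ : Lp (EuclideanSpace ℝ (Fin d)) 2 P → ℝ := fun z => P.real {ω | 0 < z ω i}
  have hms : ∀ z : Lp (EuclideanSpace ℝ (Fin d)) 2 P, MeasurableSet {ω | 0 < z ω i} := fun z =>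
    measurableSet_lt measurable_const (measurable_coord P i z)
  have h0 : (0 : Lp (EuclideanSpace ℝ (Fin d)) 2 P) ∈ D := fun c hc => by simp
  have hne : (φ '' D).Nonempty := ⟨_, 0, h0, rfl⟩
  have hbdd : BddAbove (φ '' D) := ⟨1, by rintro _ ⟨z, _, rfl⟩; exact measureReal_le_one⟩
  obtain ⟨u, hu1, hu2, hu3⟩ := exists_seq_tendsto_sSup hne hbdd
  choose z hzD hzu using hu3
  let a : ℕ → ℝ := fun n => (1 / 2 : ℝ) ^ n * (1 + ‖z n‖)⁻¹
  have ha : ∀ n, 0 < a n := fun n => by positivity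
  let w : ℕ → Lp (EuclideanSpace ℝ (Fin d)) 2 P := fun n => a n • z n
  have hwD : ∀ n, w n ∈ D := fun n => hDsmul _ (hzD n) _ (ha n).le
  have hws : Summable w := by
    refine Summable.of_norm_bounded (g := fun n => (1 / 2 : ℝ) ^ n) summable_geometric_two fun n => ?_
    rw [norm_smul, Real.norm_of_nonneg (ha n).le]
    simp only [a]
    rw [mul_assoc]
    refine mul_le_of_le_one_right (by positivity) ?_
    rw [inv_mul_le_iff₀ (by positivity)]
    linarith
  set Z := ∑' n, w n with hZ
  have hZD : Z ∈ D := hDsum w hwD hws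
  have hZge : ∀ n, ∀ᵐ ω ∂P, a n * z n ω i ≤ Z ω i := by
    intro n
    have h1 : Z = w n + ∑' k, (if k = n then 0 else w k) := hws.tsum_eq_add_tsum_ite n
    have h2 : (∑' k, (if k = n then 0 else w k)) ∈ D := by
      refine hDsum _ (fun k => ?_) ?_
      · split_ifs
        · exact h0
        · exact hwD k
      · have := hws.update n 0
        convert this using 1
        ext1 k
        simp [Function.update_apply]
    filter_upwards [Lp.coeFn_add (w n) (∑' k, (if k = n then 0 else w k)), hDnn _ h2,
      Lp.coeFn_smul (a n) (z n)] with ω e1 e2 e3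
    rw [h1, e1]
    simp only [w, Pi.add_apply, PiLp.add_apply]
    rw [e3]
    simp only [Pi.smul_apply, PiLp.smul_apply, smul_eq_mul]
    linarith
  have hφge : ∀ n, u n ≤ φ Z := by
    intro n
    rw [← hzu n]
    refine ENNReal.toReal_mono (measure_ne_top _ _) (measure_mono_ae ?_)
    filter_upwards [hZge n] with ω h h'
    exact lt_of_lt_of_le (mul_pos (ha n) h') h
  have hφ : sSup (φ '' D) ≤ φ Z := le_of_tendsto' hu2 hφge
  refine ⟨Z, hZD, ?_⟩
  by_contra hcon
  have hB : MeasurableSet {ω | 0 < Z ω i}ᶜ := (hms Z).compl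
  have hPB : P {ω | 0 < Z ω i}ᶜ ≠ 0 := hcon
  obtain ⟨y, hy1, hy2⟩ := C.hyperplane_separation' (hpos i _ hB hPB)
  have hyD : -y ∈ D := fun c hc => by rw [inner_neg_right]; linarith [hy1 c hc]
  rw [inner_basisInd] at hy2
  have hyZ := hDadd _ hZD _ hyD
  have hle : φ (Z + -y) ≤ φ Z := (le_csSup hbdd ⟨_, hyZ, rfl⟩).trans hφ
  have hsub : {ω | 0 < Z ω i} ≤ᵐ[P] {ω | 0 < (Z + -y) ω i} := by
    filter_upwards [Lp.coeFn_add Z (-y), hDnn _ hyD] with ω e1 e2 h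
    change 0 < (Z + -y) ω i
    rw [e1]
    exact add_pos_of_pos_of_nonneg h e2
  have hdiff : P ({ω | 0 < (Z + -y) ω i} \ {ω | 0 < Z ω i}) = 0 := by
    have e1 : P {ω | 0 < (Z + -y) ω i} ≤ P {ω | 0 < Z ω i} :=
      (ENNReal.toReal_le_toReal (measure_ne_top _ _) (measure_ne_top _ _)).1 hle
    have := ae_eq_of_ae_subset_of_measure_ge hsub e1 (hms Z).nullMeasurableSet (measure_ne_top _ _)
    exact (ae_le_set.1 this.symm.le)
  have hzero : ∀ᵐ ω ∂(P.restrict {ω | 0 < Z ω i}ᶜ), 0 ≤ y ω i := by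
    rw [ae_restrict_iff' hB]
    have e0 : ∀ᵐ ω ∂P, ω ∉ ({ω | 0 < (Z + -y) ω i} \ {ω | 0 < Z ω i}) :=
      measure_eq_zero_iff_ae_notMem.1 hdiff
    filter_upwards [e0, Lp.coeFn_add Z (-y), Lp.coeFn_neg y, hDnn _ hZD] with ω e1 e2 e3 e4 e5
    by_contra h
    push Not at h
    apply e1
    refine ⟨?_, e5⟩
    change 0 < (Z + -y) ω i
    rw [e2]
    simp only [Pi.add_apply, PiLp.add_apply]
    rw [e3]
    simp only [Pi.neg_apply, PiLp.neg_apply]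
    linarith
  exact absurd (integral_nonneg_of_ae hzero) (not_le.2 hy2)

theorem kreps_yan (C : ProperCone ℝ (Lp (EuclideanSpace ℝ (Fin d)) 2 P))
    (hneg : ∀ (i : Fin d) (B : Set Ω) (hB : MeasurableSet B), -(basisInd P i hB) ∈ C)
    (hpos : ∀ (i : Fin d) (B : Set Ω) (hB : MeasurableSet B), P B ≠ 0 → basisInd P i hB ∉ C) :
    ∃ z : Lp (EuclideanSpace ℝ (Fin d)) 2 P, (∀ c ∈ C, inner ℝ c z ≤ 0) ∧
      ∀ i, ∀ᵐ ω ∂P, 0 < z ω i := by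
  choose z hz1 hz2 using kreps_yan_coord P C hneg hpos
  refine ⟨∑ j, z j, fun c hc => ?_, fun i => ?_⟩
  · rw [inner_sum]; exact Finset.sum_nonpos fun j _ => hz1 j c hc
  · have h1 : (∑ j, z j) = z i + ∑ j ∈ Finset.univ.erase i, z j :=
      (Finset.add_sum_erase _ _ (Finset.mem_univ i)).symm
    have h2 : ∀ᵐ ω ∂P, 0 ≤ (∑ j ∈ Finset.univ.erase i, z j) ω i := by
      refine polar_nonneg P C hneg _ (fun c hc => ?_) i
      rw [inner_sum]; exact Finset.sum_nonpos fun j _ => hz1 j c hc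
    rw [h1]
    filter_upwards [h2, hz2 i, Lp.coeFn_add (z i) (∑ j ∈ Finset.univ.erase i, z j)] with ω e1 e2 e3
    rw [e3]
    exact add_pos_of_pos_of_nonneg e2 e1

end krepsyan

theorem sum_gen_mul {d : ℕ} (i j : Fin d) (r : ℝ) (w : Fin d → ℝ) :
    ∑ k, (r • (Pi.single i 1 : Fin d → ℝ) - Pi.single j 1 : Fin d → ℝ) k * w k = r * w i - w j := by
  simp [sub_mul, Finset.sum_sub_distrib, Pi.single_apply, ite_mul]

theorem mem_dualCone_iff {d : ℕ} (M : Matrix (Fin d) (Fin d) ℝ) (w : Fin d → ℝ) :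
    w ∈ dualCone' (solvencyCone M) ↔ (∀ i, 0 ≤ w i) ∧ ∀ i j, w j ≤ M i j * w i := by
  constructor
  · intro h
    have hsub : ((Set.range fun i : Fin d => (Pi.single i 1 : Fin d → ℝ)) ∪
      {v | ∃ i j : Fin d, v = M i j • (Pi.single i 1 : Fin d → ℝ) - Pi.single j 1}) ⊆
        solvencyCone M := fun x hx => by
      refine mem_sInter.2 fun C hC => hC.1 hx
    refine ⟨fun i => ?_, fun i j => ?_⟩
    · have := h _ (hsub (Or.inl ⟨i, rfl⟩))
      simpa [Pi.single_apply, ite_mul] using this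
    · have := h _ (hsub (Or.inr ⟨i, j, rfl⟩))
      rw [sum_gen_mul] at this
      linarith
  · rintro ⟨h1, h2⟩ x hx
    refine mem_sInter.1 hx {x | 0 ≤ ∑ i, x i * w i} ⟨?_, ?_, ?_, ?_⟩
    · rintro v (⟨i, rfl⟩ | ⟨i, j, rfl⟩)
      · simpa [Pi.single_apply, ite_mul] using h1 i
      · rw [mem_ofPred_eq]
        rw [sum_gen_mul]; linarith [h2 i j]
    · exact isClosed_le continuous_const (by fun_prop)
    · intro x hx y hy a b ha hb _
      rw [mem_ofPred_eq] at *
      have : ∑ k, (a • x + b • y) k * w k = a * ∑ k, x k * w k + b * ∑ k, y k * w k := by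
        simp [Finset.mul_sum, ← Finset.sum_add_distrib, add_mul, mul_assoc]
      rw [this]
      exact add_nonneg (mul_nonneg ha hx) (mul_nonneg hb hy)
    · intro x hx c hc
      rw [mem_ofPred_eq] at *
      have : ∑ k, (c • x) k * w k = c * ∑ k, x k * w k := by
        simp [Finset.mul_sum, mul_assoc]
      rw [this]
      exact mul_nonneg hc hx

theorem ri_extend {E : Type*} [NormedAddCommGroup E] [NormedSpace ℝ E] {C : Set E} {w x : E}
    (hw : w ∈ intrinsicInterior ℝ C) (hx : x ∈ C) :
    ∃ ε : ℝ, 0 < ε ∧ w + ε • (w - x) ∈ C := by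
  obtain ⟨y, hy, rfl⟩ := mem_intrinsicInterior.1 hw
  have hxa : x ∈ affineSpan ℝ C := subset_affineSpan _ _ hx
  have hmem : ∀ ε : ℝ, (y : E) + ε • ((y : E) - x) ∈ affineSpan ℝ C := fun ε => by
    have := AffineMap.lineMap_mem (Q := affineSpan ℝ C) (1 + ε) hxa y.2
    rw [AffineMap.lineMap_apply_module'] at this
    convert this using 1
    module
  let f : ℝ → affineSpan ℝ C := fun ε => ⟨(y : E) + ε • ((y : E) - x), hmem ε⟩
  have hf : Continuous f := by
    refine Continuous.subtype_mk ?_ _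
    fun_prop
  have hf0 : f 0 = y := by ext; simp [f]
  have hnb : f ⁻¹' (((↑) : affineSpan ℝ C → E) ⁻¹' C) ∈ nhds (0 : ℝ) := by
    apply hf.continuousAt.preimage_mem_nhds
    rw [hf0]
    exact mem_interior_iff_mem_nhds.1 hy
  obtain ⟨δ, hδ, hball⟩ := Metric.mem_nhds_iff.1 hnb
  refine ⟨δ / 2, by positivity, ?_⟩
  have : δ / 2 ∈ Metric.ball (0 : ℝ) δ := by
    rw [Metric.mem_ball, Real.dist_eq, sub_zero, abs_of_pos (by positivity)]
    linarith
  exact hball this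

theorem ri_dual_of_strict {d : ℕ} {M : Matrix (Fin d) (Fin d) ℝ} (hM : IsBidAskMatrix M)
    {w : Fin d → ℝ} (hw : ∀ i, 0 < w i) (h1 : ∀ i j, M i j * M j i = 1 → w j = M i j * w i)
    (h2 : ∀ i j, M i j * M j i ≠ 1 → w j < M i j * w i) :
    w ∈ intrinsicInterior ℝ (dualCone' (solvencyCone M)) := by
  have hwK : w ∈ dualCone' (solvencyCone M) := by
    rw [mem_dualCone_iff]
    refine ⟨fun i => (hw i).le, fun i j => ?_⟩
    by_cases h : M i j * M j i = 1
    · exact (h1 i j h).le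
    · exact (h2 i j h).le
  have haff : ∀ v ∈ affineSpan ℝ (dualCone' (solvencyCone M)), ∀ i j, M i j * M j i = 1 →
      v j = M i j * v i := by
    intro v hv i j hij
    let φ : (Fin d → ℝ) →ₗ[ℝ] ℝ := LinearMap.proj j - M i j • LinearMap.proj i
    have hle : affineSpan ℝ (dualCone' (solvencyCone M)) ≤ (LinearMap.ker φ).toAffineSubspace := by
      rw [affineSpan_le]
      intro u hu
      have hu' := (mem_dualCone_iff M u).1 hu
      have e1 := hu'.2 i j
      have e2 := hu'.2 j i
      have e3 := mul_le_mul_of_nonneg_left e2 (hM.1 i j).le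
      rw [← mul_assoc, hij, one_mul] at e3
      change φ u = 0
      simp only [φ, LinearMap.sub_apply, LinearMap.smul_apply, LinearMap.proj_apply, smul_eq_mul]
      linarith
    have h3 : φ v = 0 := hle hv
    simp only [φ, LinearMap.sub_apply, LinearMap.smul_apply, LinearMap.proj_apply, smul_eq_mul] at h3
    linarith
  rw [mem_intrinsicInterior]
  refine ⟨⟨w, subset_affineSpan _ _ hwK⟩, ?_, rfl⟩
  rw [mem_interior]
  refine ⟨((↑) : affineSpan ℝ (dualCone' (solvencyCone M)) → (Fin d → ℝ)) ⁻¹'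
    ({v | ∀ i, 0 < v i} ∩ {v | ∀ i j, M i j * M j i ≠ 1 → v j < M i j * v i}), ?_, ?_, ?_⟩
  · rintro ⟨v, hv⟩ ⟨hv1, hv2⟩
    change v ∈ dualCone' (solvencyCone M)
    rw [mem_dualCone_iff]
    refine ⟨fun i => (hv1 i).le, fun i j => ?_⟩
    by_cases h : M i j * M j i = 1
    · exact (haff v hv i j h).le
    · exact (hv2 i j h).le
  · refine IsOpen.preimage continuous_subtype_val (IsOpen.inter ?_ ?_)
    · simp only [ofPred_forall]
      exact isOpen_iInter_of_finite fun i => isOpen_lt continuous_const (continuous_apply i)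
    · simp only [ofPred_forall]
      exact isOpen_iInter_of_finite fun i => isOpen_iInter_of_finite fun j =>
        isOpen_iInter_of_finite fun _ => isOpen_lt (continuous_apply j) (by fun_prop)
  · exact ⟨hw, h2⟩

theorem ri_dual_strict {d : ℕ} {M : Matrix (Fin d) (Fin d) ℝ} (hM : IsBidAskMatrix M)
    {w : Fin d → ℝ} (hw : w ∈ intrinsicInterior ℝ (dualCone' (solvencyCone M))) :
    (∀ i, 0 < w i) ∧ (∀ i j, w j ≤ M i j * w i) ∧ ∀ i j, M i j * M j i ≠ 1 → w j < M i j * w i := by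
  have hwK := (mem_dualCone_iff M w).1 (intrinsicInterior_subset hw)
  have hx : ∀ j, (fun k => M j k) ∈ dualCone' (solvencyCone M) := fun j => by
    rw [mem_dualCone_iff]
    refine ⟨fun i => (hM.1 j i).le, fun i k => ?_⟩
    rw [mul_comm]
    exact hM.2.2 j k i
  refine ⟨fun i => ?_, hwK.2, fun i j hij => ?_⟩
  · obtain ⟨ε, hε, h⟩ := ri_extend hw (hx i)
    have h' := ((mem_dualCone_iff M _).1 h).1 i
    simp only [Pi.add_apply, Pi.smul_apply, Pi.sub_apply, smul_eq_mul] at h'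
    have := mul_pos hε (hM.1 i i)
    by_contra hc
    push Not at hc
    nlinarith
  · obtain ⟨ε, hε, h⟩ := ri_extend hw (hx j)
    have h' := ((mem_dualCone_iff M _).1 h).2 i j
    simp only [Pi.add_apply, Pi.smul_apply, Pi.sub_apply, smul_eq_mul, hM.2.1 j] at h'
    have h1 : 1 ≤ M i j * M j i := by have := hM.2.2 i i j; rwa [hM.2.1 i] at this
    have h2 : 0 < M i j * M j i - 1 := by
      have := lt_of_le_of_ne h1 (Ne.symm hij); linarith
    have h3 := mul_pos hε h2
    by_contra hc
    push Not at hc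
    nlinarith

theorem ri_Icc_a {p p' q q' : ℝ} (hp' : 0 < p') (hq' : 0 < q')
    (hpp : 1 ≤ p * p') (hqq : 1 ≤ q * q')
    (h : Icc (1 / p') p ⊆ intrinsicInterior ℝ (Icc (1 / q') q)) :
    (q * q' = 1 → p = q) ∧ (q * q' ≠ 1 → p < q) := by
  have hpm : p ∈ intrinsicInterior ℝ (Icc (1 / q') q) := by
    refine h ⟨?_, le_rfl⟩
    rwa [div_le_iff₀ hp']
  have hpI := intrinsicInterior_subset hpm
  refine ⟨fun e => ?_, fun e => ?_⟩
  · have : 1 / q' = q := by rw [div_eq_iff hq'.ne']; exact e.symm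
    rw [this] at hpI
    exact le_antisymm hpI.2 hpI.1
  · have hlt : 1 / q' < q := by
      rw [div_lt_iff₀ hq']; exact lt_of_le_of_ne hqq (Ne.symm e)
    obtain ⟨ε, hε, h'⟩ := ri_extend hpm (left_mem_Icc.2 hlt.le)
    have h2 := h'.2
    simp only [smul_eq_mul] at h2
    refine lt_of_le_of_ne hpI.2 fun e => ?_
    rw [e] at h2
    have := mul_pos hε (sub_pos.2 hlt)
    linarith

theorem ri_Icc_b {r q q' : ℝ} (h1 : r ≤ q) (h2 : 1 / q' ≤ r) (hq' : 0 < q')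
    (h3 : q * q' ≠ 1 → 1 / q' < r ∧ r < q) :
    Icc r r ⊆ intrinsicInterior ℝ (Icc (1 / q') q) := by
  rw [Icc_self, singleton_subset_iff]
  by_cases h : q * q' = 1
  · have e : 1 / q' = q := by rw [div_eq_iff hq'.ne']; exact h.symm
    rw [e] at h2 ⊢
    rw [Icc_self, intrinsicInterior_singleton]
    exact le_antisymm h1 h2
  · refine interior_subset_intrinsicInterior ?_
    rw [interior_Icc]
    exact h3 h

section trunc

variable {Ω : Type*} {d : ℕ}

/-- Truncation set. -/
def truncSet (X : Ω → Fin d → ℝ) (n : ℕ) : Set Ω := {ω | ∀ i, |X ω i| ≤ n}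

theorem measurableSet_truncSet {H : MeasurableSpace Ω} {X : Ω → Fin d → ℝ}
    (hX : Measurable[H] X) (n : ℕ) : MeasurableSet[H] (truncSet X n) := by
  simp only [truncSet, ofPred_forall]
  refine MeasurableSet.iInter fun i => ?_
  exact measurableSet_le ((measurable_pi_apply i).comp hX).norm measurable_const

theorem exists_truncSet (X : Ω → Fin d → ℝ) (ω : Ω) : ∃ n, ω ∈ truncSet X n := by
  obtain ⟨n, hn⟩ := exists_nat_ge (∑ i, |X ω i|)
  exact ⟨n, fun i => (Finset.single_le_sum (f := fun i => |X ω i|) (fun _ _ => abs_nonneg _)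
    (Finset.mem_univ i)).trans hn⟩

theorem trunc_bound (X : Ω → Fin d → ℝ) (n : ℕ) (ω : Ω) (i : Fin d) :
    |(truncSet X n).indicator X ω i| ≤ n := by
  by_cases h : ω ∈ truncSet X n
  · rw [indicator_of_mem h]; exact h i
  · rw [indicator_of_notMem h]; simp

end trunc

section pairing

variable {Ω : Type*} {m : MeasurableSpace Ω} {P : Measure Ω} [IsProbabilityMeasure P] {d : ℕ}

theorem pairing_integrable {X ζ : Ω → Fin d → ℝ} (hX : Measurable X) {K : ℝ}
    (hK : ∀ ω i, |X ω i| ≤ K) (hζ : Integrable ζ P) :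
    ∀ i, Integrable (fun ω => X ω i * ζ ω i) P := by
  intro i
  have hζi : Integrable (fun ω => ζ ω i) P := hζ.eval i
  exact hζi.bdd_mul ((measurable_pi_apply i).comp hX).aestronglyMeasurable
    (Filter.Eventually.of_forall fun ω => hK ω i)

theorem condExp_pairing {H : MeasurableSpace Ω} (hH : H ≤ m) {X ζ : Ω → Fin d → ℝ}
    (hX : Measurable[H] X) {K : ℝ}
    (hK : ∀ ω i, |X ω i| ≤ K) (hζ : Integrable ζ P) :
    P[fun ω => ∑ i, X ω i * ζ ω i | H] =ᵐ[P] fun ω => ∑ i, X ω i * (P[ζ | H]) ω i := by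
  have hIntg := pairing_integrable (hX.mono hH le_rfl) hK hζ
  have h1 := condExp_finsetSum (s := Finset.univ) (f := fun i ω => X ω i * ζ ω i)
    (fun i _ => hIntg i) H
  have h2 : ∀ i, P[fun ω => X ω i * ζ ω i | H] =ᵐ[P] fun ω => X ω i * (P[ζ | H]) ω i := by
    intro i
    have hζi : Integrable (fun ω => ζ ω i) P := hζ.eval i
    have e1 := condExp_mul_of_stronglyMeasurable_left (μ := P) (m := H)
      (f := fun ω => X ω i) (g := fun ω => ζ ω i)
      (((measurable_pi_apply i).comp hX).stronglyMeasurable) (hIntg i) hζi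
    have e2 := (ContinuousLinearMap.proj (R := ℝ) (φ := fun _ : Fin d => ℝ) i).comp_condExp_comm
      (m := H) hζ
    filter_upwards [e1, e2] with ω a b
    have a' : (P[fun ω => X ω i * ζ ω i | H]) ω = X ω i * (P[fun ω => ζ ω i | H]) ω := a
    rw [a']
    congr 1
    exact b.symm
  have h3 : (fun ω => ∑ i, X ω i * ζ ω i) = ∑ i, (fun ω => X ω i * ζ ω i) := by
    ext ω; simp
  rw [h3]
  filter_upwards [h1, ae_all_iff.2 h2] with ω a b
  rw [a, Finset.sum_apply]
  exact Finset.sum_congr rfl fun i _ => b i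

theorem pairing_nonneg {H : MeasurableSpace Ω} (hH : H ≤ m) {X ζ : Ω → Fin d → ℝ}
    (hX : Measurable[H] X) (hζ : Integrable ζ P) (h : ∀ᵐ ω ∂P, 0 ≤ ∑ i, X ω i * ζ ω i) :
    ∀ᵐ ω ∂P, 0 ≤ ∑ i, X ω i * (P[ζ | H]) ω i := by
  have key : ∀ n : ℕ, ∀ᵐ ω ∂P, 0 ≤ ∑ i, (truncSet X n).indicator X ω i * (P[ζ | H]) ω i := by
    intro n
    have h1 := condExp_pairing hH (hX.indicator (measurableSet_truncSet hX n)) (trunc_bound X n) hζ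
    have h2 : 0 ≤ᵐ[P] P[fun ω => ∑ i, (truncSet X n).indicator X ω i * ζ ω i | H] := by
      refine condExp_nonneg ?_
      filter_upwards [h] with ω hω
      by_cases hm : ω ∈ truncSet X n
      · simpa [indicator_of_mem hm] using hω
      · simp [indicator_of_notMem hm]
    filter_upwards [h1, h2] with ω a b
    rw [← a]; exact b
  filter_upwards [ae_all_iff.2 key] with ω hω
  obtain ⟨n, hn⟩ := exists_truncSet X ω
  simpa [indicator_of_mem hn] using hω n

theorem pairing_zero {H : MeasurableSpace Ω} (hH : H ≤ m) {X ζ : Ω → Fin d → ℝ}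
    (hX : Measurable[H] X) (hζ : Integrable ζ P) (h : ∀ᵐ ω ∂P, 0 ≤ ∑ i, X ω i * ζ ω i)
    (h0 : ∀ᵐ ω ∂P, ∑ i, X ω i * (P[ζ | H]) ω i = 0) :
    ∀ᵐ ω ∂P, ∑ i, X ω i * ζ ω i = 0 := by
  have key : ∀ n : ℕ, ∀ᵐ ω ∂P, ∑ i, (truncSet X n).indicator X ω i * ζ ω i = 0 := by
    intro n
    have hXn := hX.indicator (measurableSet_truncSet hX n)
    have h1 := condExp_pairing hH hXn (trunc_bound X n) hζ
    have h2 : 0 ≤ᵐ[P] fun ω => ∑ i, (truncSet X n).indicator X ω i * ζ ω i := by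
      filter_upwards [h] with ω hω
      by_cases hm : ω ∈ truncSet X n
      · simpa [indicator_of_mem hm] using hω
      · simp [indicator_of_notMem hm]
    have hIntg : Integrable (fun ω => ∑ i, (truncSet X n).indicator X ω i * ζ ω i) P :=
      integrable_finsetSum _ fun i _ =>
        pairing_integrable (hXn.mono hH le_rfl) (trunc_bound X n) hζ i
    have h3 : ∫ ω, ∑ i, (truncSet X n).indicator X ω i * ζ ω i ∂P = 0 := by
      rw [← integral_condExp hH]
      refine integral_eq_zero_of_ae ?_
      filter_upwards [h1, h0] with ω a b
      rw [a]
      by_cases hm : ω ∈ truncSet X n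
      · simpa [indicator_of_mem hm] using b
      · simp [indicator_of_notMem hm]
    exact (integral_eq_zero_iff_of_nonneg_ae h2 hIntg).1 h3
  filter_upwards [ae_all_iff.2 key] with ω hω
  obtain ⟨n, hn⟩ := exists_truncSet X ω
  simpa [indicator_of_mem hn] using hω n

end pairing

section backward

variable {Ω : Type*} {m : MeasurableSpace Ω} {P : Measure Ω} [IsProbabilityMeasure P] {d T : ℕ}

theorem no_arb_of_martingale {ℱ : Filtration (Fin (T + 1)) m} {Z : Fin (T + 1) → Ω → Fin d → ℝ}
    (hZ : Martingale Z ℱ P) (hpos : ∀ᵐ ω ∂P, ∀ i, 0 < Z (Fin.last T) ω i)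
    (xs : Fin (T + 1) → Ω → Fin d → ℝ) (hxm : ∀ t, Measurable[ℱ t] (xs t))
    (hxn : ∀ t, ∀ᵐ ω ∂P, ∑ i, xs t ω i * Z t ω i ≤ 0)
    (hx : ∀ᵐ ω ∂P, ∀ i, 0 ≤ (∑ t, xs t ω) i) :
    ∀ᵐ ω ∂P, ∑ t, xs t ω = 0 := by
  classical
  let X : Fin (T + 1) → Ω → Fin d → ℝ := fun t ω => ∑ s ∈ Finset.Iic t, xs s ω
  have hXm : ∀ t, Measurable[ℱ t] (X t) := fun t =>
    Finset.measurable_fun_sum _ fun s hs => (hxm s).mono (ℱ.mono (Finset.mem_Iic.1 hs)) le_rfl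
  have hXs : ∀ (t : Fin T) ω, X t.succ ω = X t.castSucc ω + xs t.succ ω := by
    intro t ω
    have : Finset.Iic t.succ = insert t.succ (Finset.Iic t.castSucc) := by
      ext s
      simp only [Finset.mem_Iic, Finset.mem_insert, Fin.le_def, Fin.ext_iff, Fin.val_succ,
        Fin.val_castSucc]
      omega
    simp only [X]
    rw [this, Finset.sum_insert (by simp [Fin.le_def]), add_comm]
  have hXl : ∀ ω, X (Fin.last T) ω = ∑ t, xs t ω := by
    intro ω
    have : Finset.Iic (Fin.last T) = Finset.univ := by ext s; simp [Fin.le_last]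
    simp only [X, this]
  have hIntg : ∀ t, Integrable (Z t) P := hZ.integrable
  have hce : ∀ t : Fin T, P[Z t.succ | ℱ t.castSucc] =ᵐ[P] Z t.castSucc := fun t =>
    hZ.2 _ _ (Fin.castSucc_le_succ t)
  have hsplit : ∀ (t : Fin T) ω, ∑ i, X t.succ ω i * Z t.succ ω i =
      ∑ i, X t.castSucc ω i * Z t.succ ω i + ∑ i, xs t.succ ω i * Z t.succ ω i := by
    intro t ω
    rw [hXs, ← Finset.sum_add_distrib]
    exact Finset.sum_congr rfl fun i _ => by rw [Pi.add_apply, add_mul]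
  -- backward induction
  have hnn : ∀ t, ∀ᵐ ω ∂P, 0 ≤ ∑ i, X t ω i * Z t ω i := by
    intro t
    induction t using Fin.reverseInduction with
    | last =>
      filter_upwards [hx, hpos] with ω a b
      rw [hXl]
      exact Finset.sum_nonneg fun i _ => mul_nonneg (a i) (b i).le
    | cast t ih =>
      have h1 : ∀ᵐ ω ∂P, 0 ≤ ∑ i, X t.castSucc ω i * Z t.succ ω i := by
        filter_upwards [ih, hxn t.succ] with ω a b
        rw [hsplit] at a
        linarith
      have h2 := pairing_nonneg (ℱ.le _) (hXm _) (hIntg _) h1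
      filter_upwards [h2, hce t] with ω a b
      rwa [b] at a
  have hz : ∀ t, ∀ᵐ ω ∂P, ∑ i, X t ω i * Z t ω i = 0 := by
    intro t
    induction t using Fin.induction with
    | zero =>
      filter_upwards [hnn 0, hxn 0] with ω a b
      have : X 0 ω = xs 0 ω := by
        have : Finset.Iic (0 : Fin (T + 1)) = {0} := by ext s; simp
        simp only [X, this, Finset.sum_singleton]
      rw [this] at a ⊢
      linarith
    | succ t ih =>
      have h1 : ∀ᵐ ω ∂P, 0 ≤ ∑ i, X t.castSucc ω i * Z t.succ ω i := by
        filter_upwards [hnn t.succ, hxn t.succ] with ω a b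
        rw [hsplit] at a
        linarith
      have h2 := pairing_zero (ℱ.le _) (hXm _) (hIntg _) h1 (by
        filter_upwards [ih, hce t] with ω a b
        rwa [b])
      filter_upwards [h2, hxn t.succ, hnn t.succ] with ω a b c
      rw [hsplit] at c ⊢
      linarith
  filter_upwards [hz (Fin.last T), hx, hpos] with ω a b c
  rw [hXl] at a
  have := (Finset.sum_eq_zero_iff_of_nonneg (fun i _ => mul_nonneg (b i) (c i).le)).1 a
  ext i
  have := this i (Finset.mem_univ i)
  simpa [(c i).ne'] using this

theorem backward_direction (ℱ : Filtration (Fin (T + 1)) m)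
    (Pi_ : Fin (T + 1) → Ω → Matrix (Fin d) (Fin d) ℝ)
    (hba : ∀ t ω, IsBidAskMatrix (Pi_ t ω)) (Z : Fin (T + 1) → Ω → Fin d → ℝ)
    (hZ : Martingale Z ℱ P)
    (hri : ∀ t, ∀ᵐ ω ∂P, Z t ω ∈ intrinsicInterior ℝ (dualCone' (solvencyCone (Pi_ t ω)))) :
    RobustNoArbitrage P ℱ Pi_ := by
  classical
  let G : Fin (T + 1) → Set Ω := fun t => {ω | ∀ i, 0 < Z t ω i}
  have hZm : ∀ t, Measurable[ℱ t] (Z t) := fun t => (hZ.1 t).measurable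
  have hZmi : ∀ t i, Measurable[ℱ t] (fun ω => Z t ω i) := fun t i =>
    (measurable_pi_apply i).comp (hZm t)
  have hG : ∀ t, MeasurableSet[ℱ t] (G t) := fun t => by
    simp only [G, ofPred_forall]
    exact MeasurableSet.iInter fun i => measurableSet_lt measurable_const (hZmi t i)
  let Y : Fin (T + 1) → Ω → Fin d → ℝ := fun t ω i => if ω ∈ G t then Z t ω i else 1
  have hY : ∀ t ω i, 0 < Y t ω i := fun t ω i => by
    simp only [Y]
    split_ifs with h
    · exact h i
    · exact one_pos
  have hYm : ∀ t i, Measurable[ℱ t] (fun ω => Y t ω i) := fun t i =>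
    Measurable.ite (hG t) (hZmi t i) measurable_const
  have hGae : ∀ t, ∀ᵐ ω ∂P, ω ∈ G t := fun t => by
    filter_upwards [hri t] with ω h
    exact (ri_dual_strict (hba t ω) h).1
  have hYZ : ∀ t, ∀ᵐ ω ∂P, Y t ω = Z t ω := fun t => by
    filter_upwards [hGae t] with ω h
    ext i
    simp [Y, h]
  refine ⟨fun t ω => Matrix.of fun i j => Y t ω j / Y t ω i, fun t i j => ?_, fun t ω => ?_,
    fun t i j => ?_, ?_⟩
  · exact (hYm t j).div (hYm t i)
  · refine ⟨fun i j => div_pos (hY t ω j) (hY t ω i), fun i => div_self (hY t ω i).ne',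
      fun i j k => le_of_eq ?_⟩
    have h1 := (hY t ω i).ne'
    have h2 := (hY t ω k).ne'
    simp only [Matrix.of_apply]
    field_simp
  · filter_upwards [hri t, hYZ t] with ω h hy
    obtain ⟨h1, h2, h3⟩ := ri_dual_strict (hba t ω) h
    simp only [Matrix.of_apply, hy, one_div_div]
    have hq := (hba t ω).1 j i
    refine ri_Icc_b ?_ ?_ hq fun hne => ⟨?_, ?_⟩
    · rw [div_le_iff₀ (h1 i)]; exact h2 i j
    · rw [div_le_div_iff₀ hq (h1 i)]; linarith [h2 j i]
    · rw [div_lt_div_iff₀ hq (h1 i)]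
      have := h3 j i (by rwa [mul_comm])
      linarith
    · rw [div_lt_iff₀ (h1 i)]; exact h3 i j hne
  · rintro x ⟨xs, hxs, hsum⟩ ⟨_, hx⟩
    have := no_arb_of_martingale hZ (hGae _) xs (fun t => (hxs t).1) (fun t => ?_) ?_
    · filter_upwards [this] with ω h
      rw [← hsum, h]
    · filter_upwards [(hxs t).2, hYZ t] with ω h hy
      have hd : Y t ω ∈ dualCone' (solvencyCone (Matrix.of fun i j => Y t ω j / Y t ω i)) := by
        rw [mem_dualCone_iff]
        refine ⟨fun i => (hY t ω i).le, fun i j => le_of_eq ?_⟩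
        simp only [Matrix.of_apply]
        rw [div_mul_cancel₀ _ (hY t ω i).ne']
      have h1 := hd _ h
      rw [hy] at h1
      simp only [Pi.neg_apply, neg_mul, Finset.sum_neg_distrib] at h1
      linarith
    · filter_upwards [hx] with ω h i
      rw [hsum]; exact h i

end backward

section density

theorem AttS.single {Ω ι E : Type*} {m : MeasurableSpace Ω} [NormedAddCommGroup E] [NormedSpace ℝ E]
    [Fintype ι] [DecidableEq ι]
    {P : Measure Ω} {H : ι → MeasurableSpace Ω} {pos : ι → Prop} {g : ι → Ω → E} (k : ι)
    {c : Ω → ℝ} (hc : Measurable[H k] c) (hc0 : pos k → ∀ ω, 0 ≤ c ω) :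
    AttS P H pos g Finset.univ (fun ω => c ω • g k ω) := by
  refine ⟨fun l ω => if l = k then c ω else 0, fun l _ => ?_, fun l _ hl ω => ?_, ?_⟩
  · by_cases h : l = k
    · subst h; simpa using hc
    · simp [h]
  · by_cases h : l = k
    · subst h; simpa using hc0 hl ω
    · simp [h]
  · refine Filter.Eventually.of_forall fun ω => ?_
    simp [ite_smul]

variable {Ω ι : Type*} {m : MeasurableSpace Ω} (P : Measure Ω) [IsProbabilityMeasure P] {d : ℕ}
  [Fintype ι] [DecidableEq ι]

/-- The closed cone in `L²` of attainable positions. -/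
noncomputable def attCone {H : ι → MeasurableSpace Ω} {pos : ι → Prop}
    {g : ι → Ω → EuclideanSpace ℝ (Fin d)} (f : ι → ℕ) (hf : ∀ a b, f a ≤ f b → H a ≤ H b)
    (hnull : NullProp P H pos g) : ProperCone ℝ (Lp (EuclideanSpace ℝ (Fin d)) 2 P) where
  carrier := {x | AttS P H pos g Finset.univ x}
  add_mem' := fun {x y} hx hy => (AttS.add hx hy).congr (Lp.coeFn_add x y)
  zero_mem' := by
    refine ⟨fun _ _ => 0, fun _ _ => measurable_const, fun _ _ _ _ => le_rfl, ?_⟩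
    filter_upwards [Lp.coeFn_zero (EuclideanSpace ℝ (Fin d)) 2 P] with ω h
    rw [h]; simp
  smul_mem' := fun c x hx => by
    refine (AttS.smul hx (a := fun _ => (c : ℝ)) (fun _ _ => measurable_const) fun _ => c.2).congr ?_
    filter_upwards [Lp.coeFn_smul (c : ℝ) x] with ω h
    exact h
  isClosed' := by
    refine IsSeqClosed.isClosed fun xs x hxs hx => ?_
    have h1 := tendstoInMeasure_of_tendsto_Lp hx
    obtain ⟨ns, _, h2⟩ := h1.exists_seq_tendsto_ae
    exact attS_closed hnull f hf Finset.univ _ _ (fun n => hxs (ns n)) h2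

theorem exists_density {H : ι → MeasurableSpace Ω} {pos : ι → Prop} (gp : ι → Ω → Fin d → ℝ)
    (hgm : ∀ k, Measurable[H k] (gp k)) (hH : ∀ k, H k ≤ m)
    (f : ι → ℕ) (hf : ∀ a b, f a ≤ f b → H a ≤ H b)
    (s : Fin d → ι) (hs1 : ∀ i ω, gp (s i) ω = -Pi.single i 1) (hs2 : ∀ i, H (s i) = m)
    (hs3 : ∀ i, pos (s i))
    (hnull : NullProp P H pos (fun k ω => WithLp.toLp 2 (gp k ω))) :
    ∃ ζ : Ω → Fin d → ℝ, Integrable ζ P ∧ (∀ i, ∀ᵐ ω ∂P, 0 < ζ ω i) ∧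
      ∀ (k : ι) (σ : ℝ), (pos k → 0 ≤ σ) →
        ∀ᵐ ω ∂P, σ * ∑ i, gp k ω i * (P[ζ | H k]) ω i ≤ 0 := by
  classical
  let g : ι → Ω → EuclideanSpace ℝ (Fin d) := fun k ω => WithLp.toLp 2 (gp k ω)
  let C := attCone P f hf hnull
  have hC : ∀ x, x ∈ C ↔ AttS P H pos g Finset.univ x := fun x => Iff.rfl
  have hcoe : ∀ (i : Fin d) (B : Set Ω) (hB : MeasurableSet B), ∀ᵐ ω ∂P,
      (basisInd P i hB) ω = B.indicator (fun _ => (1 : ℝ)) ω • EuclideanSpace.single i (1 : ℝ) := by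
    intro i B hB
    have := indicatorConstLp_coeFn (p := 2) (hs := hB) (hμs := measure_ne_top P B)
      (c := EuclideanSpace.single i (1 : ℝ))
    filter_upwards [this] with ω h
    rw [basisInd, h]
    by_cases hω : ω ∈ B <;> simp [hω]
  have hgs : ∀ i ω, g (s i) ω = - EuclideanSpace.single i (1 : ℝ) := by
    intro i ω
    simp only [g, hs1]
    rfl
  have hneg : ∀ (i : Fin d) (B : Set Ω) (hB : MeasurableSet B), -(basisInd P i hB) ∈ C := by
    intro i B hB
    rw [hC]
    have hm : Measurable[H (s i)] (B.indicator (fun _ => (1 : ℝ))) := by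
      rw [hs2]; exact measurable_const.indicator hB
    refine (AttS.single (P := P) (g := g) (s i) hm
      fun _ ω => indicator_nonneg (fun _ _ => zero_le_one) ω).congr ?_
    filter_upwards [Lp.coeFn_neg (basisInd P i hB), hcoe i B hB] with ω h1 h2
    rw [h1, Pi.neg_apply, h2, hgs, smul_neg]
  have hpos : ∀ (i : Fin d) (B : Set Ω) (hB : MeasurableSet B), P B ≠ 0 → basisInd P i hB ∉ C := by
    intro i B hB hPB hmem
    obtain ⟨c, hc1, hc2, hc3⟩ := (hC _).1 hmem
    let b : Ω → ℝ := B.indicator (fun _ => (1 : ℝ))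
    have hm : Measurable[H (s i)] b := by
      rw [hs2]; exact measurable_const.indicator hB
    have hb0 : ∀ ω, 0 ≤ b ω := fun ω => indicator_nonneg (fun _ _ => zero_le_one) ω
    have key := hnull (fun k ω => c k ω + if k = s i then b ω else 0) ?_ ?_ ?_ (s i) (hs3 i)
    · apply hPB
      have : ∀ᵐ ω ∂P, ω ∉ B := by
        filter_upwards [key] with ω h hω
        have h' : (c (s i) ω + b ω) • g (s i) ω = 0 := by
          have h0 : (c (s i) ω + if s i = s i then b ω else 0) • g (s i) ω = 0 := h
          rwa [if_pos rfl] at h0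
        rw [hgs] at h'
        have h2 := congrArg (fun v : EuclideanSpace ℝ (Fin d) => v i) h'
        simp [b, hω] at h2
        have := hc2 (s i) (Finset.mem_univ _) (hs3 i) ω
        linarith
      exact measure_eq_zero_iff_ae_notMem.2 this
    · intro k
      by_cases h : k = s i
      · subst h; simp only [if_true]; exact (hc1 _ (Finset.mem_univ _)).add hm
      · simpa [h] using hc1 k (Finset.mem_univ _)
    · intro k hk ω
      have := hc2 k (Finset.mem_univ _) hk ω
      by_cases h : k = s i
      · subst h; simpa using add_nonneg this (hb0 ω)
      · simpa [h] using this
    · filter_upwards [hc3, hcoe i B hB] with ω h1 h2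
      change ∑ k, (c k ω + if k = s i then b ω else 0) • g k ω = 0
      simp only [add_smul, Finset.sum_add_distrib]
      rw [← h1, h2]
      simp only [ite_smul, zero_smul, Finset.sum_ite_eq', Finset.mem_univ, if_true, hgs]
      simp [b]
  obtain ⟨z, hz1, hz2⟩ := kreps_yan P C hneg hpos
  let ζ : Ω → Fin d → ℝ := fun ω i => z ω i
  have hζ : Integrable ζ P := Integrable.of_eval fun i => integrable_coord P i z
  refine ⟨ζ, hζ, hz2, fun k σ hσ => ?_⟩
  have hZm : Measurable[H k] (P[ζ | H k]) := stronglyMeasurable_condExp.measurable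
  have hφm : Measurable[H k] (fun ω => σ * ∑ i, gp k ω i * (P[ζ | H k]) ω i) := by
    refine measurable_const.mul (Finset.measurable_fun_sum _ fun i _ => ?_)
    exact ((measurable_pi_apply i).comp (hgm k)).mul ((measurable_pi_apply i).comp hZm)
  have key : ∀ n : ℕ, ∀ᵐ ω ∂P, ω ∈ truncSet (gp k) n →
      σ * ∑ i, gp k ω i * (P[ζ | H k]) ω i ≤ 0 := by
    intro n
    let B : Set Ω := truncSet (gp k) n ∩ {ω | 0 < σ * ∑ i, gp k ω i * (P[ζ | H k]) ω i}
    have hB : MeasurableSet[H k] B :=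
      (measurableSet_truncSet (hgm k) n).inter (measurableSet_lt measurable_const hφm)
    let b : Ω → ℝ := B.indicator (fun _ => σ)
    have hbm : Measurable[H k] b := measurable_const.indicator hB
    let X : Ω → Fin d → ℝ := fun ω => b ω • gp k ω
    have hXm : Measurable[H k] X := hbm.smul (hgm k)
    have hXb : ∀ ω i, |X ω i| ≤ |σ| * n := by
      intro ω i
      by_cases h : ω ∈ B
      · simp only [X, b, indicator_of_mem h, Pi.smul_apply, smul_eq_mul, abs_mul]
        exact mul_le_mul_of_nonneg_left (h.1 i) (abs_nonneg _)
      · simp only [X, b, indicator_of_notMem h, zero_smul, Pi.zero_apply, abs_zero]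
        positivity
    have hXE : MemLp (fun ω => WithLp.toLp 2 (X ω) : Ω → EuclideanSpace ℝ (Fin d)) 2 P := by
      refine MemLp.of_bound (C := ∑ _i : Fin d, |σ| * n) ?_ (Filter.Eventually.of_forall fun ω => ?_)
      · exact ((WithLp.measurable_toLp 2 _).comp (hXm.mono (hH k) le_rfl)).aestronglyMeasurable
      · rw [EuclideanSpace.norm_eq]
        refine Real.sqrt_le_iff.2 ⟨Finset.sum_nonneg fun i _ => by positivity, ?_⟩
        refine (Finset.sum_le_sum fun i _ => ?_).trans
          (Finset.sum_sq_le_sq_sum_of_nonneg fun i _ => by positivity)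
        exact pow_le_pow_left₀ (norm_nonneg _) (hXb ω i) 2
    have hmem : hXE.toLp ∈ C := by
      rw [hC]
      refine (AttS.single (P := P) (g := g) k hbm
        fun hk ω => indicator_nonneg (fun _ _ => hσ hk) ω).congr ?_
      filter_upwards [hXE.coeFn_toLp] with ω h
      rw [h]
      rfl
    have h1 := hz1 _ hmem
    rw [L2.inner_def] at h1
    have h2 : ∫ ω, inner ℝ ((hXE.toLp : Lp (EuclideanSpace ℝ (Fin d)) 2 P) ω) (z ω) ∂P = ∫ ω, ∑ i, X ω i * ζ ω i ∂P := by
      refine integral_congr_ae ?_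
      filter_upwards [hXE.coeFn_toLp] with ω h
      rw [h, PiLp.inner_apply]
      refine Finset.sum_congr rfl fun i _ => ?_
      simp [ζ, mul_comm]
    rw [h2, ← integral_condExp (hH k), integral_congr_ae (condExp_pairing (hH k) hXm hXb hζ)] at h1
    have hXZ : ∀ ω, ∑ i, X ω i * (P[ζ | H k]) ω i =
        b ω * ∑ i, gp k ω i * (P[ζ | H k]) ω i := by
      intro ω
      rw [Finset.mul_sum]
      exact Finset.sum_congr rfl fun i _ => by simp [X, mul_assoc]
    have hnn : ∀ ω, 0 ≤ ∑ i, X ω i * (P[ζ | H k]) ω i := by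
      intro ω
      rw [hXZ]
      by_cases h : ω ∈ B
      · simp only [b, indicator_of_mem h]; exact h.2.le
      · simp [b, indicator_of_notMem h]
    have hIntg : Integrable (fun ω => ∑ i, X ω i * (P[ζ | H k]) ω i) P :=
      integrable_finsetSum _ fun i _ =>
        pairing_integrable (hXm.mono (hH k) le_rfl) hXb integrable_condExp i
    have h3 := (integral_eq_zero_iff_of_nonneg hnn hIntg).1
      (le_antisymm h1 (integral_nonneg hnn))
    filter_upwards [h3] with ω h hω
    by_contra hlt
    push Not at hlt
    have hωB : ω ∈ B := ⟨hω, hlt⟩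
    have h' : ∑ i, X ω i * (P[ζ | H k]) ω i = 0 := h
    rw [hXZ] at h'
    simp only [b, indicator_of_mem hωB] at h'
    linarith
  filter_upwards [ae_all_iff.2 key] with ω h
  obtain ⟨n, hn⟩ := exists_truncSet (gp k) ω
  exact h n hn

theorem condExp_pos {H : MeasurableSpace Ω} (hH : H ≤ m) {ζ : Ω → Fin d → ℝ}
    (hζ : Integrable ζ P) (h : ∀ i, ∀ᵐ ω ∂P, 0 < ζ ω i) (i : Fin d) :
    ∀ᵐ ω ∂P, 0 < (P[ζ | H]) ω i := by
  have hZm : Measurable[H] (P[ζ | H]) := stronglyMeasurable_condExp.measurable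
  have hZi : Measurable[H] (fun ω => (P[ζ | H]) ω i) := (measurable_pi_apply i).comp hZm
  have h1 := pairing_nonneg (P := P) hH (X := fun _ => Pi.single i 1) measurable_const hζ (by
    filter_upwards [h i] with ω hi
    simpa [Pi.single_apply, ite_mul] using hi.le)
  let B : Set Ω := {ω | (P[ζ | H]) ω i = 0}
  have hB : MeasurableSet[H] B := hZi (measurableSet_singleton 0)
  have h2 := pairing_zero (P := P) hH (X := B.indicator fun _ => Pi.single i 1)
    (measurable_const.indicator hB) hζ (by
    filter_upwards [h i] with ω hi
    by_cases hω : ω ∈ B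
    · simpa [hω, Pi.single_apply, ite_mul] using hi.le
    · simp [hω]) (by
    refine Filter.Eventually.of_forall fun ω => ?_
    by_cases hω : ω ∈ B
    · have : (P[ζ | H]) ω i = 0 := hω
      simp [hω, Pi.single_apply, ite_mul, this]
    · simp [hω])
  filter_upwards [h1, h2, h i] with ω a b c
  have a' : 0 ≤ (P[ζ | H]) ω i := by simpa [Pi.single_apply, ite_mul] using a
  refine lt_of_le_of_ne a' fun e => ?_
  have hω : ω ∈ B := e.symm
  rw [indicator_of_mem hω] at b
  have b' : ζ ω i = 0 := by simpa [Pi.single_apply, ite_mul] using b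
  linarith

end density

section cone

variable {d : ℕ} {M : Matrix (Fin d) (Fin d) ℝ}

theorem solvencyCone_smul {x : Fin d → ℝ} (hx : x ∈ solvencyCone M) {c : ℝ} (hc : 0 ≤ c) :
    c • x ∈ solvencyCone M :=
  mem_sInter.2 fun C hC => hC.2.2.2 x (mem_sInter.1 hx C hC) c hc

theorem solvencyCone_add {x y : Fin d → ℝ} (hx : x ∈ solvencyCone M) (hy : y ∈ solvencyCone M) :
    x + y ∈ solvencyCone M := by
  refine mem_sInter.2 fun C hC => ?_
  have h := hC.2.2.1 (mem_sInter.1 hx C hC) (mem_sInter.1 hy C hC)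
    (by norm_num : (0 : ℝ) ≤ 1 / 2) (by norm_num : (0 : ℝ) ≤ 1 / 2) (by norm_num)
  have h2 := hC.2.2.2 _ h 2 (by norm_num)
  convert h2 using 1
  module

theorem solvencyCone_gen (i j : Fin d) :
    M i j • (Pi.single i 1 : Fin d → ℝ) - Pi.single j 1 ∈ solvencyCone M :=
  mem_sInter.2 fun _ hC => hC.1 (Or.inr ⟨i, j, rfl⟩)

theorem solvencyCone_zero (i : Fin d) : (0 : Fin d → ℝ) ∈ solvencyCone M := by
  have := solvencyCone_smul (solvencyCone_gen (M := M) i i) (le_refl (0 : ℝ))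
  simpa using this

theorem solvencyCone_sum {κ : Type*} (i : Fin d) (S : Finset κ) (x : κ → Fin d → ℝ)
    (hx : ∀ k ∈ S, x k ∈ solvencyCone M) : ∑ k ∈ S, x k ∈ solvencyCone M := by
  classical
  induction S using Finset.induction_on with
  | empty => simpa using solvencyCone_zero i
  | insert a S ha ih =>
    rw [Finset.sum_insert ha]
    exact solvencyCone_add (hx a (Finset.mem_insert_self _ _))
      (ih fun k hk => hx k (Finset.mem_insert_of_mem hk))

end cone

theorem NullProp.toLp {Ω ι : Type*} {m : MeasurableSpace Ω} {P : Measure Ω} {d : ℕ} [Fintype ι]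
    {H : ι → MeasurableSpace Ω} {pos : ι → Prop} {g : ι → Ω → Fin d → ℝ}
    (h : NullProp P H pos g) :
    NullProp P H pos (fun k ω => (WithLp.toLp 2 (g k ω) : EuclideanSpace ℝ (Fin d))) := by
  intro c h1 h2 h3 k hk
  have := h c h1 h2 (by
    filter_upwards [h3] with ω hω
    have := congrArg WithLp.ofLp hω
    simpa [WithLp.ofLp_sum] using this) k hk
  filter_upwards [this] with ω hω
  rw [← WithLp.toLp_smul, hω]; rfl

/-- Index type for the generators. -/
abbrev GenIdx (T d : ℕ) := (Fin (T + 1) × Fin d × Fin d × Bool) ⊕ Fin d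

section forward

variable {Ω : Type*} {m : MeasurableSpace Ω} {P : Measure Ω} [IsProbabilityMeasure P] {d T : ℕ}

open Classical in
/-- Generators: prices `p` on the off-friction part, `q` on the frictionless part. -/
noncomputable def genVec (Pi_ p q : Fin (T + 1) → Ω → Matrix (Fin d) (Fin d) ℝ) (e : ℝ) :
    GenIdx T d → Ω → Fin d → ℝ
  | Sum.inl (t, i, j, true), ω => if Pi_ t ω i j * Pi_ t ω j i = 1 then 0 else
      Pi.single j 1 - p t ω i j • (Pi.single i 1 : Fin d → ℝ)
  | Sum.inl (t, i, j, false), ω => if Pi_ t ω i j * Pi_ t ω j i = 1 then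
      Pi.single j 1 - q t ω i j • (Pi.single i 1 : Fin d → ℝ) else 0
  | Sum.inr i, _ => e • -Pi.single i 1

/-- The information available for each generator. -/
@[reducible]
def genSig (ℱ : Filtration (Fin (T + 1)) m) : GenIdx T d → MeasurableSpace Ω
  | Sum.inl (t, _) => ℱ t
  | Sum.inr _ => m

/-- Sign constraint for each generator. -/
def genPos : GenIdx T d → Prop
  | Sum.inl (_, _, _, b) => b = true
  | Sum.inr _ => True

/-- Time rank for each generator. -/
def genRank : GenIdx T d → ℕ
  | Sum.inl (t, _) => t
  | Sum.inr _ => T + 1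

theorem genVec_measurable (ℱ : Filtration (Fin (T + 1)) m)
    {Pi_ p q : Fin (T + 1) → Ω → Matrix (Fin d) (Fin d) ℝ} {e : ℝ}
    (h : ∀ t i j, Measurable[ℱ t] fun ω => Pi_ t ω i j)
    (hp : ∀ t i j, Measurable[ℱ t] fun ω => p t ω i j)
    (hq : ∀ t i j, Measurable[ℱ t] fun ω => q t ω i j) (k : GenIdx T d) :
    Measurable[genSig ℱ k] (genVec Pi_ p q e k) := by
  classical
  rcases k with ⟨t, i, j, b⟩ | i
  · have hD : MeasurableSet[ℱ t] {ω | Pi_ t ω i j * Pi_ t ω j i = 1} :=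
      ((h t i j).mul (h t j i)) (measurableSet_singleton 1)
    cases b
    · exact Measurable.ite hD (measurable_const.sub ((hq t i j).smul_const _)) measurable_const
    · exact Measurable.ite hD measurable_const (measurable_const.sub ((hp t i j).smul_const _))
  · exact measurable_const

theorem gen_nullProp (hd : 1 ≤ d) (ℱ : Filtration (Fin (T + 1)) m)
    {Pi_ Pi' : Fin (T + 1) → Ω → Matrix (Fin d) (Fin d) ℝ}
    (hadapted : ∀ t i j, Measurable[ℱ t] fun ω => Pi_ t ω i j)
    (hm' : ∀ t i j, Measurable[ℱ t] fun ω => Pi' t ω i j)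
    (hba' : ∀ t ω, IsBidAskMatrix (Pi' t ω))
    (h1 : ∀ᵐ ω ∂P, ∀ t i j, Pi_ t ω i j * Pi_ t ω j i = 1 → Pi' t ω i j = Pi_ t ω i j)
    (h2 : ∀ᵐ ω ∂P, ∀ t i j, Pi_ t ω i j * Pi_ t ω j i ≠ 1 → Pi' t ω i j < Pi_ t ω i j)
    (hNA : ∀ x : Ω → Fin d → ℝ, MemAttainable P ℱ Pi' x →
      MemL0 P (ℱ (Fin.last T)) (fun _ => {v | ∀ i, 0 ≤ v i}) x → ∀ᵐ ω ∂P, x ω = 0) :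
    NullProp P (genSig ℱ) genPos
      (genVec Pi_ (fun t ω => Matrix.of fun i j => (Pi_ t ω i j + Pi' t ω i j) / 2) Pi_ 1) := by
  classical
  set ph : Fin (T + 1) → Ω → Matrix (Fin d) (Fin d) ℝ :=
    fun t ω => Matrix.of fun i j => (Pi_ t ω i j + Pi' t ω i j) / 2 with hph
  intro c hc1 hc2 hc3 k hk
  let g := genVec Pi_ ph Pi_ 1
  let gt := genVec Pi_ Pi' Pi' 0
  let xs : Fin (T + 1) → Ω → Fin d → ℝ := fun t ω => ∑ p, c (Sum.inl (t, p)) ω • gt (Sum.inl (t, p)) ω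
  have hxm : ∀ t, Measurable[ℱ t] (xs t) := fun t =>
    Finset.measurable_fun_sum _ fun p _ =>
      Measurable.smul (hc1 (Sum.inl (t, p))) (genVec_measurable ℱ hadapted hm' hm' (Sum.inl (t, p)))
  have hxK : ∀ t, ∀ᵐ ω ∂P, xs t ω ∈ -(solvencyCone (Pi' t ω)) := by
    intro t
    filter_upwards [h1] with ω h1
    rw [Set.mem_neg, ← Finset.sum_neg_distrib]
    have i0 : Fin d := ⟨0, hd⟩
    refine solvencyCone_sum i0 _ _ fun p _ => ?_
    obtain ⟨i, j, b⟩ := p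
    by_cases hD : Pi_ t ω i j * Pi_ t ω j i = 1
    · cases b
      · have e : gt (Sum.inl (t, i, j, false)) ω =
          Pi.single j 1 - Pi' t ω i j • (Pi.single i 1 : Fin d → ℝ) := if_pos hD
        rw [e]
        rcases le_total 0 (c (Sum.inl (t, i, j, false)) ω) with hc | hc
        · convert solvencyCone_smul (solvencyCone_gen (M := Pi' t ω) i j) hc using 1
          module
        · have hpp : Pi' t ω i j * Pi' t ω j i = 1 := by
            rw [h1 t i j hD, h1 t j i (by rwa [mul_comm])]; exact hD
          have := solvencyCone_smul (solvencyCone_gen (M := Pi' t ω) j i)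
            (mul_nonneg (neg_nonneg.2 hc) ((hba' t ω).1 i j).le)
          convert this using 1
          rw [smul_sub (-c (Sum.inl (t, i, j, false)) ω * Pi' t ω i j), smul_smul, mul_assoc, hpp]
          module
      · have e : gt (Sum.inl (t, i, j, true)) ω = 0 := if_pos hD
        rw [e]
        simpa using solvencyCone_zero i0
    · cases b
      · have e : gt (Sum.inl (t, i, j, false)) ω = 0 := if_neg hD
        rw [e]
        simpa using solvencyCone_zero i0
      · have e : gt (Sum.inl (t, i, j, true)) ω =
          Pi.single j 1 - Pi' t ω i j • (Pi.single i 1 : Fin d → ℝ) := if_neg hD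
        rw [e]
        convert solvencyCone_smul (solvencyCone_gen (M := Pi' t ω) i j) (hc2 (Sum.inl (t, i, j, true)) rfl ω) using 1
        module
  have hgain : ∀ᵐ ω ∂P, ∀ k, 0 ≤ c k ω • (gt k ω - g k ω) := by
    filter_upwards [h1, h2] with ω h1 h2 k
    rcases k with ⟨t, i, j, b⟩ | i
    · by_cases hD : Pi_ t ω i j * Pi_ t ω j i = 1
      · cases b
        · have e : gt (Sum.inl (t, i, j, false)) ω =
            Pi.single j 1 - Pi' t ω i j • (Pi.single i 1 : Fin d → ℝ) := if_pos hD
          have e' : g (Sum.inl (t, i, j, false)) ω =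
            Pi.single j 1 - Pi_ t ω i j • (Pi.single i 1 : Fin d → ℝ) := if_pos hD
          rw [e, e', h1 t i j hD]; simp
        · have e : gt (Sum.inl (t, i, j, true)) ω = 0 := if_pos hD
          have e' : g (Sum.inl (t, i, j, true)) ω = 0 := if_pos hD
          rw [e, e']; simp
      · cases b
        · have e : gt (Sum.inl (t, i, j, false)) ω = 0 := if_neg hD
          have e' : g (Sum.inl (t, i, j, false)) ω = 0 := if_neg hD
          rw [e, e']; simp
        · have e : gt (Sum.inl (t, i, j, true)) ω =
            Pi.single j 1 - Pi' t ω i j • (Pi.single i 1 : Fin d → ℝ) := if_neg hD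
          have e' : g (Sum.inl (t, i, j, true)) ω =
            Pi.single j 1 - ph t ω i j • (Pi.single i 1 : Fin d → ℝ) := if_neg hD
          rw [e, e']
          have e2 : (Pi.single j 1 - Pi' t ω i j • (Pi.single i 1 : Fin d → ℝ)) -
            (Pi.single j 1 - ph t ω i j • (Pi.single i 1 : Fin d → ℝ)) =
              (ph t ω i j - Pi' t ω i j) • (Pi.single i 1 : Fin d → ℝ) := by module
          rw [e2]
          refine smul_nonneg (hc2 (Sum.inl (t, i, j, true)) rfl ω) (smul_nonneg ?_ ?_)
          · have := h2 t i j hD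
            simp only [hph, Matrix.of_apply]
            linarith
          · exact Pi.single_nonneg.2 zero_le_one
    · have e : gt (Sum.inr i) ω = (0 : ℝ) • -Pi.single i 1 := rfl
      have e' : g (Sum.inr i) ω = (1 : ℝ) • -Pi.single i 1 := rfl
      rw [e, e']
      refine smul_nonneg (hc2 (Sum.inr i) trivial ω) ?_
      simp
  have hsum : ∀ᵐ ω ∂P, ∑ k, c k ω • (gt k ω - g k ω) = ∑ t, xs t ω := by
    filter_upwards [hc3] with ω h
    have h' : ∑ k, c k ω • g k ω = 0 := h
    simp only [smul_sub, Finset.sum_sub_distrib]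
    rw [h', sub_zero, Fintype.sum_sum_type, Fintype.sum_prod_type]
    have : ∑ i : Fin d, c (Sum.inr i) ω • gt (Sum.inr i) ω = 0 :=
      Finset.sum_eq_zero fun i _ => by
        have e : gt (Sum.inr i) ω = (0 : ℝ) • -Pi.single i 1 := rfl
        rw [e]; simp
    rw [this, add_zero]
  have hx0 := hNA (fun ω => ∑ t, xs t ω) ⟨xs, fun t => ⟨hxm t, hxK t⟩, fun ω => rfl⟩
    ⟨Finset.measurable_fun_sum _ fun t _ => (hxm t).mono (ℱ.mono (Fin.le_last t)) le_rfl, by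
      filter_upwards [hsum, hgain] with ω a b
      rw [← a]
      exact Finset.sum_nonneg fun k _ => b k⟩
  filter_upwards [hx0, hsum, hgain, h2] with ω a b hg h2
  rw [a] at b
  have hk0 := (Finset.sum_eq_zero_iff_of_nonneg fun k _ => hg k).1 b k (Finset.mem_univ k)
  change c k ω • g k ω = 0
  rcases k with ⟨t, i, j, b⟩ | i
  · have hb : b = true := hk
    subst hb
    by_cases hD : Pi_ t ω i j * Pi_ t ω j i = 1
    · have e' : g (Sum.inl (t, i, j, true)) ω = 0 := if_pos hD
      rw [e', smul_zero]
    · have e : gt (Sum.inl (t, i, j, true)) ω =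
        Pi.single j 1 - Pi' t ω i j • (Pi.single i 1 : Fin d → ℝ) := if_neg hD
      have e' : g (Sum.inl (t, i, j, true)) ω =
        Pi.single j 1 - ph t ω i j • (Pi.single i 1 : Fin d → ℝ) := if_neg hD
      rw [e, e'] at hk0
      have e2 : (Pi.single j 1 - Pi' t ω i j • (Pi.single i 1 : Fin d → ℝ)) -
        (Pi.single j 1 - ph t ω i j • (Pi.single i 1 : Fin d → ℝ)) =
          (ph t ω i j - Pi' t ω i j) • (Pi.single i 1 : Fin d → ℝ) := by module
      rw [e2] at hk0
      have h3 := congrFun hk0 i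
      simp only [Pi.smul_apply, Pi.single_eq_same, smul_eq_mul, mul_one, Pi.zero_apply] at h3
      have h4 := h2 t i j hD
      have h5 : ph t ω i j - Pi' t ω i j ≠ 0 := by
        simp only [hph, Matrix.of_apply]
        intro h; linarith
      rcases mul_eq_zero.1 h3 with h | h
      · rw [h, zero_smul]
      · exact absurd h h5
  · have e : gt (Sum.inr i) ω = (0 : ℝ) • -Pi.single i 1 := rfl
    rw [e, zero_smul, zero_sub, smul_neg, neg_eq_zero] at hk0
    exact hk0

theorem forward_direction (hd : 1 ≤ d) (ℱ : Filtration (Fin (T + 1)) m)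
    (Pi_ : Fin (T + 1) → Ω → Matrix (Fin d) (Fin d) ℝ)
    (hadapted : ∀ t i j, Measurable[ℱ t] fun ω => Pi_ t ω i j)
    (hba : ∀ t ω, IsBidAskMatrix (Pi_ t ω)) (h : RobustNoArbitrage P ℱ Pi_) :
    ∃ Z : Fin (T + 1) → Ω → Fin d → ℝ, Martingale Z ℱ P ∧
      ∀ t, ∀ᵐ ω ∂P, Z t ω ∈ intrinsicInterior ℝ (dualCone' (solvencyCone (Pi_ t ω))) := by
  classical
  obtain ⟨Pi', hm', hba', hri, hNA⟩ := h
  have hone : ∀ {M : Matrix (Fin d) (Fin d) ℝ}, IsBidAskMatrix M → ∀ i j, 1 ≤ M i j * M j i :=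
    fun hM i j => by rw [← hM.2.1 i]; exact hM.2.2 i i j
  have hri' : ∀ᵐ ω ∂P, ∀ t i j, (Pi_ t ω i j * Pi_ t ω j i = 1 → Pi' t ω i j = Pi_ t ω i j) ∧
      (Pi_ t ω i j * Pi_ t ω j i ≠ 1 → Pi' t ω i j < Pi_ t ω i j) := by
    rw [ae_all_iff]; intro t
    rw [ae_all_iff]; intro i
    rw [ae_all_iff]; intro j
    filter_upwards [hri t i j] with ω hω
    exact ri_Icc_a ((hba' t ω).1 j i) ((hba t ω).1 j i) (hone (hba' t ω) i j) (hone (hba t ω) i j) hω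
  have h1 : ∀ᵐ ω ∂P, ∀ t i j, Pi_ t ω i j * Pi_ t ω j i = 1 → Pi' t ω i j = Pi_ t ω i j := by
    filter_upwards [hri'] with ω hω t i j using (hω t i j).1
  have h2 : ∀ᵐ ω ∂P, ∀ t i j, Pi_ t ω i j * Pi_ t ω j i ≠ 1 → Pi' t ω i j < Pi_ t ω i j := by
    filter_upwards [hri'] with ω hω t i j using (hω t i j).2
  have hnull := gen_nullProp hd ℱ hadapted hm' hba' h1 h2 hNA
  set ph : Fin (T + 1) → Ω → Matrix (Fin d) (Fin d) ℝ :=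
    fun t ω => Matrix.of fun i j => (Pi_ t ω i j + Pi' t ω i j) / 2 with hph
  have hphm : ∀ t i j, Measurable[ℱ t] fun ω => ph t ω i j := fun t i j =>
    ((hadapted t i j).add (hm' t i j)).div_const 2
  have hle : ∀ k : GenIdx T d, genSig ℱ k ≤ m := by
    rintro (⟨t, _⟩ | i)
    · exact ℱ.le t
    · exact le_rfl
  obtain ⟨ζ, hζ, hζpos, hpol⟩ := exists_density P (genVec Pi_ ph Pi_ 1)
    (genVec_measurable ℱ hadapted hphm hadapted) hle genRank
    (by
      rintro (⟨t, _⟩ | i) (⟨s, _⟩ | j) hab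
      · exact ℱ.mono hab
      · exact ℱ.le t
      · have := s.2
        simp only [genRank] at hab
        omega
      · exact le_rfl)
    Sum.inr (fun i ω => one_smul ℝ _) (fun i => rfl) (fun i => trivial) hnull.toLp
  refine ⟨fun t => P[ζ | ℱ t], martingale_condExp ζ ℱ P, fun t => ?_⟩
  have hpos : ∀ᵐ ω ∂P, ∀ i, 0 < (P[ζ | ℱ t]) ω i :=
    ae_all_iff.2 fun i => condExp_pos P (ℱ.le t) hζ hζpos i
  have hp : ∀ i j b (σ : ℝ), (b = true → 0 ≤ σ) → ∀ᵐ ω ∂P,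
      σ * ∑ l, genVec Pi_ ph Pi_ 1 (Sum.inl (t, i, j, b)) ω l * (P[ζ | ℱ t]) ω l ≤ 0 :=
    fun i j b σ hσ => hpol (Sum.inl (t, i, j, b)) σ hσ
  have hval : ∀ (i j : Fin d) (r : ℝ) (w : Fin d → ℝ),
      ∑ k, (Pi.single j 1 - r • (Pi.single i 1 : Fin d → ℝ) : Fin d → ℝ) k * w k
        = w j - r * w i := by
    intro i j r w
    simp [sub_mul, Finset.sum_sub_distrib, Pi.single_apply, ite_mul]
  have ha : ∀ᵐ ω ∂P, ∀ i j, (1 : ℝ) * ∑ l, genVec Pi_ ph Pi_ 1 (Sum.inl (t, i, j, true)) ω l *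
      (P[ζ | ℱ t]) ω l ≤ 0 :=
    ae_all_iff.2 fun i => ae_all_iff.2 fun j => hp i j true 1 fun _ => zero_le_one
  have hb : ∀ᵐ ω ∂P, ∀ i j, (1 : ℝ) * ∑ l, genVec Pi_ ph Pi_ 1 (Sum.inl (t, i, j, false)) ω l *
      (P[ζ | ℱ t]) ω l ≤ 0 :=
    ae_all_iff.2 fun i => ae_all_iff.2 fun j => hp i j false 1 fun _ => zero_le_one
  have hc : ∀ᵐ ω ∂P, ∀ i j, (-1 : ℝ) * ∑ l, genVec Pi_ ph Pi_ 1 (Sum.inl (t, i, j, false)) ω l *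
      (P[ζ | ℱ t]) ω l ≤ 0 :=
    ae_all_iff.2 fun i => ae_all_iff.2 fun j => hp i j false (-1) fun h => by cases h
  filter_upwards [hpos, ha, hb, hc, h2] with ω hpos ha hb hc h2
  refine ri_dual_of_strict (hba t ω) hpos (fun i j hD => ?_) (fun i j hD => ?_)
  · have e : genVec Pi_ ph Pi_ 1 (Sum.inl (t, i, j, false)) ω =
      Pi.single j 1 - Pi_ t ω i j • (Pi.single i 1 : Fin d → ℝ) := if_pos hD
    have hb' := hb i j
    have hc' := hc i j
    rw [e, hval] at hb' hc'
    linarith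
  · have e : genVec Pi_ ph Pi_ 1 (Sum.inl (t, i, j, true)) ω =
      Pi.single j 1 - ph t ω i j • (Pi.single i 1 : Fin d → ℝ) := if_neg hD
    have ha' := ha i j
    rw [e, hval] at ha'
    have h3 := h2 t i j hD
    have h4 : ph t ω i j < Pi_ t ω i j := by
      simp only [hph, Matrix.of_apply]; linarith
    have := mul_lt_mul_of_pos_right h4 (hpos i)
    linarith

end forward

/-- The robust no-arbitrage condition NAʳ holds iff there exists a strictly
consistent price process: an `ℝ^d`-valued `P`-martingale `Z` adapted to `(𝔉_t)`
with `Z_t(ω) ∈ ri K_t*(ω)` a.e. for every `t`. -/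
theorem robust_no_arbitrage_iff_strictly_consistent
    {Ω : Type*} {d T : ℕ} (hd : 1 ≤ d)
    {m : MeasurableSpace Ω} (P : Measure Ω) [IsProbabilityMeasure P]
    (ℱ : Filtration (Fin (T + 1)) m)
    (hcomplete : ∀ t : Fin (T + 1), ∀ s : Set Ω,
      MeasurableSet[m] s → P s = 0 → MeasurableSet[ℱ t] s)
    (Pi_ : Fin (T + 1) → Ω → Matrix (Fin d) (Fin d) ℝ)
    (hadapted : ∀ t i j, Measurable[ℱ t] fun ω => Pi_ t ω i j)
    (hba : ∀ t ω, IsBidAskMatrix (Pi_ t ω)) :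
    RobustNoArbitrage P ℱ Pi_ ↔
      ∃ Z : Fin (T + 1) → Ω → Fin d → ℝ,
        Martingale Z ℱ P ∧
        ∀ t, ∀ᵐ ω ∂P, Z t ω ∈
          intrinsicInterior ℝ (dualCone' (solvencyCone (Pi_ t ω))) := by
  constructor
  · exact forward_direction hd ℱ Pi_ hadapted hba
  · rintro ⟨Z, hZ, h⟩
    exact backward_direction ℱ Pi_ hba Z hZ h
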